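/- arXiv:2210.02540 — 4 statements merged into one kernel-verified Lean document; each statement's English description precedes it below -/
import Mathlib

section
/- Let k ≥ 1, α ∈ (−(k+1)/2, −k/2), and let g : (0,∞)^k → ℝ be measurable with g(c x) = c^α g(x) for all c > 0, and ∫_{(0,∞)^k} |g(y) g(1+y)| dy < ∞. Then for every λ > 0 and t ≥ 0, ∫_{ℝ^k} h_t^λ(x)² dx = 2 ∫_0^t ∫_0^{t−s} u^{2α+k} e^{−λ k u} ( ∫_{(0,∞)^k} g(y) g(1+y) e^{−2λ u ⟨1, y⟩} dy ) du ds, where ⟨1,y⟩ = y_1 + ⋯ + y_k, and all integrals converge absolutely. -/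
open MeasureTheory Real Set

/-- The kernel `h_t^λ` of the tempered generalized Hermite process. -/
noncomputable def tghKernel {k : ℕ} (g : (Fin k → ℝ) → ℝ) (lam t : ℝ)
    (x : Fin k → ℝ) : ℝ :=
  ∫ s in Set.Ioc (0 : ℝ) t,
    Set.indicator {s' : ℝ | ∀ i, x i < s'}
      (fun s' => g (fun i => s' - x i) * Real.exp (-lam * ∑ i, (s' - x i))) s

/-!
The kernel is a moving average `x ↦ ∫₀ᵗ φ(s·1 - x) ds` of the profile
`φ(y) = g(y) exp(-λ ⟨1, y⟩)` on the positive orthant. Squaring it and integrating over `x` first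
leaves the integral over `(0, t]²` of the autocorrelation of `φ` at `|s - r|·1`; the symmetry
`s ↔ r` and the substitution `u = r - s` turn this into twice an integral over the triangle
`0 < s ≤ t`, `0 < u ≤ t - s`. Dilating by `u` multiplies `φ` by `u ^ α` and replaces `λ` by `λ u`,
so the autocorrelation at `u·1` is `u ^ (2α + k)` times a factor bounded by
`∫ |g(y) g(1 + y)| dy`. Since `2α + k > -1`, everything converges absolutely.
-/

/-- The autocorrelation `h ↦ ∫ f(y) f(h + y) dμ(y)` of a real function on an additive group. -/
noncomputable def autocorrelation {G : Type*} [AddCommGroup G] [MeasurableSpace G]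
    (μ : Measure G) (f : G → ℝ) (h : G) : ℝ :=
  ∫ y, f y * f (h + y) ∂μ

section Autocorrelation

variable {G : Type*} [AddCommGroup G] [MeasurableSpace G] {μ : Measure G} {f : G → ℝ}

lemma abs_autocorrelation_le (μ : Measure G) (f : G → ℝ) (h : G) :
    |autocorrelation μ f h| ≤ autocorrelation μ |f| h := by
  simpa only [autocorrelation, Pi.abs_apply, ← abs_mul] using abs_integral_le_integral_abs

lemma measurable_autocorrelation [MeasurableAdd₂ G] [SFinite μ] (hf : Measurable f) :
    Measurable (autocorrelation μ f) := by
  refine (StronglyMeasurable.integral_prod_right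
    (f := fun h y => f y * f (h + y)) ?_).measurable
  exact (by fun_prop : Measurable fun p : G × G => f p.2 * f (p.1 + p.2)).stronglyMeasurable

lemma integrableOn_autocorrelation_smul [MeasurableAdd₂ G] [SFinite μ] [Module ℝ G]
    [MeasurableSMul ℝ G] {v : G} {s : Set ℝ} (hf : Measurable f)
    (hcorr : IntegrableOn (fun u : ℝ => autocorrelation μ |f| (u • v)) s) :
    IntegrableOn (fun u : ℝ => autocorrelation μ f (u • v)) s :=
  hcorr.mono' ((measurable_autocorrelation hf).comp (by fun_prop)).aestronglyMeasurable
    (.of_forall fun u => abs_autocorrelation_le μ f (u • v))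

lemma autocorrelation_neg [MeasurableAdd G] [μ.IsAddLeftInvariant] (f : G → ℝ) (h : G) :
    autocorrelation μ f (-h) = autocorrelation μ f h := by
  calc ∫ y, f y * f (-h + y) ∂μ
      = ∫ y, f (h + y) * f (-h + (h + y)) ∂μ :=
        (integral_add_left_eq_self (fun y => f y * f (-h + y)) h).symm
    _ = ∫ y, f y * f (h + y) ∂μ := by simp only [neg_add_cancel_left, mul_comm]

variable [MeasurableAdd G] [MeasurableNeg G] [μ.IsAddLeftInvariant] [μ.IsNegInvariant]

lemma integral_mul_sub_sub (f : G → ℝ) (a b : G) :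
    ∫ x, f (a - x) * f (b - x) ∂μ = autocorrelation μ f (b - a) := by
  simpa only [autocorrelation, sub_add_sub_cancel] using
    integral_sub_left_eq_self (fun y => f y * f (b - a + y)) μ a

lemma integrable_mul_sub_sub {a b : G}
    (h : Integrable (fun y => f y * f (b - a + y)) μ) :
    Integrable (fun x => f (a - x) * f (b - x)) μ := by
  simpa only [sub_add_sub_cancel] using h.comp_sub_left a

end Autocorrelation

section Square

variable {E : Type*} [NormedAddCommGroup E] {c : ℝ → E} {t : ℝ}

lemma ae_prod_fst_ne_snd {α : Type*} [MeasurableSpace α] [MeasurableEq α]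
    (μ ν : Measure α) [SFinite ν] [NullSingletonClass ν] : ∀ᵐ p ∂μ.prod ν, p.1 ≠ p.2 := by
  have hdiag : MeasurableSet {p : α × α | p.1 ≠ p.2}ᶜ :=
    (measurableSet_eq_fun measurable_fst measurable_snd).compl.compl
  refine mem_ae_iff.2 ((Measure.measure_prod_null hdiag).2 (.of_forall fun x => ?_))
  have hslice : Prod.mk x ⁻¹' {p : α × α | p.1 ≠ p.2}ᶜ = {x} := by ext y; simp [eq_comm]
  simp [hslice]

lemma integrable_comp_fst_sub_snd {μ ν : Measure ℝ} [SFinite μ] [μ.IsAddRightInvariant]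
    [IsFiniteMeasure ν] (hc : Integrable c μ) :
    Integrable (fun p : ℝ × ℝ => c (p.1 - p.2)) (μ.prod ν) :=
  (measurePreserving_sub_prod μ ν).integrable_comp_of_integrable (hc.comp_fst ν)

lemma comp_abs_sub_ae_eq (c : ℝ → E) (t : ℝ) :
    (fun p : ℝ × ℝ => c |p.1 - p.2|)
      =ᵐ[(volume.restrict (Ioc 0 t)).prod (volume.restrict (Ioc 0 t))]
    fun p => (Ioc 0 t).indicator c (p.1 - p.2) + (Ioc 0 t).indicator c (p.2 - p.1) := by
  have hsquare : ∀ᵐ p ∂(volume.restrict (Ioc 0 t)).prod (volume.restrict (Ioc 0 t)),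
      p ∈ Ioc 0 t ×ˢ Ioc 0 t := by
    rw [Measure.prod_restrict]
    exact ae_restrict_mem (measurableSet_Ioc.prod measurableSet_Ioc)
  filter_upwards [hsquare, ae_prod_fst_ne_snd _ _] with ⟨s, r⟩ ⟨⟨hs0, hst⟩, ⟨hr0, hrt⟩⟩ hne
  dsimp only at hst hrt hs0 hr0 hne ⊢
  rcases lt_or_gt_of_ne hne with hsr | hrs
  · have hmem : r - s ∈ Ioc 0 t := ⟨by linarith, by linarith⟩
    have hnot : s - r ∉ Ioc 0 t := fun h => by linarith [h.1]
    rw [indicator_of_mem hmem, indicator_of_notMem hnot, zero_add, abs_sub_comm,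
      abs_of_pos hmem.1]
  · have hmem : s - r ∈ Ioc 0 t := ⟨by linarith, by linarith⟩
    have hnot : r - s ∉ Ioc 0 t := fun h => by linarith [h.1]
    rw [indicator_of_mem hmem, indicator_of_notMem hnot, add_zero, abs_of_pos hmem.1]

lemma integrable_indicator_fst_sub_snd (hc : IntegrableOn c (Ioc 0 t)) :
    Integrable (fun p : ℝ × ℝ => (Ioc 0 t).indicator c (p.1 - p.2))
      ((volume.restrict (Ioc 0 t)).prod (volume.restrict (Ioc 0 t))) := by
  have h := integrable_comp_fst_sub_snd (ν := volume.restrict (Ioc 0 t))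
    (hc.integrable_indicator measurableSet_Ioc)
  exact h.mono_measure (Measure.prod_mono Measure.restrict_le_self le_rfl)

lemma integrable_comp_abs_sub (hc : IntegrableOn c (Ioc 0 t)) :
    Integrable (fun p : ℝ × ℝ => c |p.1 - p.2|)
      ((volume.restrict (Ioc 0 t)).prod (volume.restrict (Ioc 0 t))) := by
  have h := integrable_indicator_fst_sub_snd hc
  exact (h.add h.swap).congr (comp_abs_sub_ae_eq c t).symm

lemma integrableOn_triangle (hc : IntegrableOn c (Ioc 0 t)) :
    IntegrableOn (fun p : ℝ × ℝ => c p.2)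
      {p : ℝ × ℝ | p.1 ∈ Ioc 0 t ∧ p.2 ∈ Ioc 0 (t - p.1)} := by
  have hsquare : IntegrableOn (fun p : ℝ × ℝ => c p.2) (Ioc 0 t ×ˢ Ioc 0 t) := by
    rw [IntegrableOn, Measure.volume_eq_prod, ← Measure.prod_restrict]
    exact hc.comp_snd _
  exact hsquare.mono_set fun p ⟨hs, hu⟩ => ⟨hs, hu.1, by linarith [hu.2, hs.1]⟩

variable [NormedSpace ℝ E]

lemma setIntegral_indicator_comp_sub (c : ℝ → E) {s : ℝ} (hs : s ∈ Ioc 0 t) :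
    ∫ r in Ioc 0 t, (Ioc 0 t).indicator c (r - s) = ∫ u in Ioc 0 (t - s), c u := by
  have hinter : Ioc (0 - s) (t - s) ∩ Ioc 0 t = Ioc 0 (t - s) := by
    rw [Ioc_inter_Ioc, max_eq_right (by linarith [hs.1]), min_eq_left (by linarith [hs.1])]
  rw [← intervalIntegral.integral_of_le (hs.1.le.trans hs.2),
    intervalIntegral.integral_comp_sub_right ((Ioc 0 t).indicator c),
    intervalIntegral.integral_of_le (by linarith [hs.1, hs.2]),
    setIntegral_indicator measurableSet_Ioc, hinter]

lemma integral_comp_abs_sub (hc : IntegrableOn c (Ioc 0 t)) :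
    ∫ p : ℝ × ℝ, c |p.1 - p.2| ∂(volume.restrict (Ioc 0 t)).prod (volume.restrict (Ioc 0 t)) =
      (2 : ℝ) • ∫ s in Ioc 0 t, ∫ u in Ioc 0 (t - s), c u := by
  have hlower := integrable_indicator_fst_sub_snd hc
  have hupper := hlower.swap
  have hsymm := integral_prod_swap (μ := volume.restrict (Ioc 0 t))
    (ν := volume.restrict (Ioc 0 t)) fun p : ℝ × ℝ => (Ioc 0 t).indicator c (p.2 - p.1)
  dsimp only [Function.comp_def, Prod.swap, Prod.fst_swap, Prod.snd_swap] at hupper hsymm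
  rw [integral_congr_ae (comp_abs_sub_ae_eq c t), integral_add hlower hupper, hsymm, ← two_smul ℝ,
    integral_prod _ hupper,
    setIntegral_congr_fun measurableSet_Ioc fun s hs => setIntegral_indicator_comp_sub c hs]

lemma sq_setIntegral (F : ℝ → ℝ) (s : Set ℝ) :
    (∫ r in s, F r) ^ 2 =
      ∫ p : ℝ × ℝ, F p.1 * F p.2 ∂(volume.restrict s).prod (volume.restrict s) := by
  rw [sq, integral_prod_mul]

end Square

section MovingAverage

variable {E : Type*} [AddCommGroup E] [Module ℝ E] [MeasurableSpace E] [MeasurableAdd₂ E]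
  [MeasurableNeg E] {μ : Measure E} [μ.IsAddLeftInvariant] [μ.IsNegInvariant] {f : E → ℝ} {v : E}

lemma integral_mul_smul_sub_smul_sub (f : E → ℝ) (v : E) (s r : ℝ) :
    ∫ x, f (s • v - x) * f (r • v - x) ∂μ = autocorrelation μ f (|s - r| • v) := by
  rw [integral_mul_sub_sub, ← sub_smul]
  rcases le_total s r with hsr | hrs
  · rw [abs_sub_comm, abs_of_nonneg (sub_nonneg.2 hsr)]
  · rw [abs_of_nonneg (sub_nonneg.2 hrs), ← autocorrelation_neg, ← neg_smul, neg_sub]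

lemma integrable_mul_smul_sub_smul_sub
    (hint : ∀ u : ℝ, 0 < u → Integrable (fun y => f y * f (u • v + y)) μ) {s r : ℝ}
    (hsr : s ≠ r) : Integrable (fun x => f (s • v - x) * f (r • v - x)) μ := by
  wlog h : s < r generalizing s r
  · simpa only [mul_comm] using this hsr.symm (lt_of_le_of_ne (not_lt.1 h) hsr.symm)
  · refine integrable_mul_sub_sub ?_
    simpa only [sub_smul] using hint (r - s) (sub_pos.2 h)

variable [MeasurableSMul ℝ E] [SFinite μ] {t : ℝ}

lemma integrable_prod_mul_smul_sub_smul_sub (hf : Measurable f)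
    (hint : ∀ u : ℝ, 0 < u → Integrable (fun y => f y * f (u • v + y)) μ)
    (hcorr : IntegrableOn (fun u : ℝ => autocorrelation μ |f| (u • v)) (Ioc 0 t)) :
    Integrable (fun q : (ℝ × ℝ) × E => f (q.1.1 • v - q.2) * f (q.1.2 • v - q.2))
      (((volume.restrict (Ioc 0 t)).prod (volume.restrict (Ioc 0 t))).prod μ) := by
  have hmeas : Measurable fun q : (ℝ × ℝ) × E => f (q.1.1 • v - q.2) * f (q.1.2 • v - q.2) := by
    fun_prop
  refine (integrable_prod_iff hmeas.aestronglyMeasurable).2 ⟨?_, ?_⟩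
  · filter_upwards [ae_prod_fst_ne_snd _ _] with p hp
    exact integrable_mul_smul_sub_smul_sub hint hp
  · simpa only [norm_mul, Real.norm_eq_abs, ← Pi.abs_apply, integral_mul_smul_sub_smul_sub] using
      integrable_comp_abs_sub hcorr

lemma integrable_sq_setIntegral_smul_sub (hf : Measurable f)
    (hint : ∀ u : ℝ, 0 < u → Integrable (fun y => f y * f (u • v + y)) μ)
    (hcorr : IntegrableOn (fun u : ℝ => autocorrelation μ |f| (u • v)) (Ioc 0 t)) :
    Integrable (fun x => (∫ s in Ioc 0 t, f (s • v - x)) ^ 2) μ := by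
  simp only [sq_setIntegral]
  exact (integrable_prod_mul_smul_sub_smul_sub hf hint hcorr).swap.integral_prod_left

lemma integral_sq_setIntegral_smul_sub (hf : Measurable f)
    (hint : ∀ u : ℝ, 0 < u → Integrable (fun y => f y * f (u • v + y)) μ)
    (hcorr : IntegrableOn (fun u : ℝ => autocorrelation μ |f| (u • v)) (Ioc 0 t)) :
    ∫ x, (∫ s in Ioc 0 t, f (s • v - x)) ^ 2 ∂μ =
      2 * ∫ s in Ioc 0 t, ∫ u in Ioc 0 (t - s), autocorrelation μ f (u • v) := by
  have hprod := integrable_prod_mul_smul_sub_smul_sub hf hint hcorr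
  simp only [sq_setIntegral]
  rw [← integral_prod_symm _ hprod, integral_prod _ hprod]
  simp only [integral_mul_smul_sub_smul_sub]
  exact integral_comp_abs_sub (integrableOn_autocorrelation_smul hf hcorr)

end MovingAverage

section Homogeneous

/-- Positive homogeneity of degree `α` on `s`: `g(c x) = c ^ α g(x)` for `c > 0` and `x ∈ s`. -/
def IsPosHomogeneousOn {E : Type*} [SMul ℝ E] (g : E → ℝ) (α : ℝ) (s : Set E) : Prop :=
  ∀ c : ℝ, 0 < c → ∀ x ∈ s, g (c • x) = c ^ α * g x

lemma IsPosHomogeneousOn.abs {E : Type*} [SMul ℝ E] {g : E → ℝ} {α : ℝ} {s : Set E}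
    (hg : IsPosHomogeneousOn g α s) : IsPosHomogeneousOn |g| α s := fun c hc x hx => by
  rw [Pi.abs_apply, hg c hc x hx, abs_mul, abs_of_pos (rpow_pos_of_pos hc α), Pi.abs_apply]

end Homogeneous

section Dilation

variable {E : Type*} [NormedAddCommGroup E] [NormedSpace ℝ E] [MeasurableSpace E] [BorelSpace E]
  [FiniteDimensional ℝ E] {μ : Measure E} [μ.IsAddHaarMeasure] {f : E → ℝ} {u : ℝ} {v : E}

lemma autocorrelation_smul (f : E → ℝ) (hu : 0 < u) (v : E) :
    autocorrelation μ f (u • v) =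
      u ^ Module.finrank ℝ E * autocorrelation μ (fun y => f (u • y)) v := by
  have hpow : 0 < u ^ Module.finrank ℝ E := pow_pos hu _
  have hscale := Measure.integral_comp_smul_of_nonneg μ (fun y => f y * f (u • v + y)) u
    (hR := hu.le)
  simp only [← smul_add, smul_eq_mul] at hscale
  rw [autocorrelation, autocorrelation, hscale, mul_inv_cancel_left₀ hpow.ne']

lemma integrable_mul_add_smul_iff (hu : u ≠ 0) :
    Integrable (fun y => f y * f (u • v + y)) μ ↔
      Integrable (fun y => f (u • y) * f (u • (v + y))) μ := by
  rw [← integrable_comp_smul_iff μ _ hu]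
  simp only [smul_add]

end Dilation

section TemperedProfile

variable {ι : Type*}

/-- The open positive orthant `(0, ∞)^ι`. -/
def positiveOrthant (ι : Type*) : Set (ι → ℝ) := {y | ∀ i, 0 < y i}

lemma measurableSet_positiveOrthant [Countable ι] : MeasurableSet (positiveOrthant ι) := by
  rw [positiveOrthant, ofPred_forall]
  exact .iInter fun i => measurableSet_lt measurable_const (measurable_pi_apply i)

lemma one_add_mem_positiveOrthant {y : ι → ℝ} (hy : y ∈ positiveOrthant ι) :
    1 + y ∈ positiveOrthant ι := fun i => add_pos one_pos (hy i)

lemma smul_mem_positiveOrthant_iff {u : ℝ} (hu : 0 < u) {y : ι → ℝ} :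
    u • y ∈ positiveOrthant ι ↔ y ∈ positiveOrthant ι :=
  forall_congr' fun _ => mul_pos_iff_of_pos_left hu

variable [Fintype ι]

/-- The function `1_{(0, ∞)^ι}(y) g(y) exp(-λ ⟨1, y⟩)`, whose translates `s ↦ φ(s·1 - x)` are
integrated to give the kernel of the tempered process. -/
noncomputable def temperedProfile (g : (ι → ℝ) → ℝ) (lam : ℝ) : (ι → ℝ) → ℝ :=
  (positiveOrthant ι).indicator fun y => g y * exp (-lam * ∑ i, y i)

variable {g : (ι → ℝ) → ℝ} {α lam u : ℝ}

lemma measurable_temperedProfile (hg : Measurable g) (lam : ℝ) :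
    Measurable (temperedProfile g lam) :=
  Measurable.indicator (by fun_prop) measurableSet_positiveOrthant

lemma abs_temperedProfile (g : (ι → ℝ) → ℝ) (lam : ℝ) :
    |temperedProfile g lam| = temperedProfile |g| lam := by
  ext y
  by_cases hy : y ∈ positiveOrthant ι <;> simp [temperedProfile, hy, abs_mul]

lemma temperedProfile_smul (hhom : IsPosHomogeneousOn g α (positiveOrthant ι)) (lam : ℝ)
    (hu : 0 < u) (y : ι → ℝ) :
    temperedProfile g lam (u • y) = u ^ α * temperedProfile g (lam * u) y := by
  by_cases hy : y ∈ positiveOrthant ι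
  · have huy := (smul_mem_positiveOrthant_iff hu).2 hy
    simp only [temperedProfile, indicator_of_mem hy, indicator_of_mem huy, hhom u hu y hy,
      Pi.smul_apply, smul_eq_mul, ← Finset.mul_sum]
    ring_nf
  · have huy := mt (smul_mem_positiveOrthant_iff hu).1 hy
    simp only [temperedProfile, indicator_of_notMem hy, indicator_of_notMem huy, mul_zero]

lemma temperedProfile_smul_mul_smul (hhom : IsPosHomogeneousOn g α (positiveOrthant ι))
    (lam : ℝ) (hu : 0 < u) (y z : ι → ℝ) :
    temperedProfile g lam (u • y) * temperedProfile g lam (u • z) =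
      u ^ (2 * α) * (temperedProfile g (lam * u) y * temperedProfile g (lam * u) z) := by
  rw [temperedProfile_smul hhom lam hu, temperedProfile_smul hhom lam hu, two_mul, rpow_add hu,
    mul_mul_mul_comm]

lemma temperedProfile_mul_one_add (g : (ι → ℝ) → ℝ) (lam : ℝ) (y : ι → ℝ) :
    temperedProfile g lam y * temperedProfile g lam (1 + y) =
      exp (-lam * Fintype.card ι) *
        (positiveOrthant ι).indicator (fun y => g y * g (1 + y) * exp (-2 * lam * ∑ i, y i)) y := by
  by_cases hy : y ∈ positiveOrthant ι
  · have hsum : ∑ i, (1 + y) i = Fintype.card ι + ∑ i, y i := by simp [Finset.sum_add_distrib]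
    have hexp : exp (-lam * ∑ i, y i) * exp (-lam * (Fintype.card ι + ∑ i, y i)) =
        exp (-lam * Fintype.card ι) * exp (-2 * lam * ∑ i, y i) := by
      rw [← exp_add, ← exp_add]
      ring_nf
    simp only [temperedProfile, indicator_of_mem hy,
      indicator_of_mem (one_add_mem_positiveOrthant hy), hsum]
    linear_combination g y * g (1 + y) * hexp
  · simp only [temperedProfile, indicator_of_notMem hy, zero_mul, mul_zero]

lemma autocorrelation_temperedProfile_one (g : (ι → ℝ) → ℝ) (lam : ℝ) :
    autocorrelation volume (temperedProfile g lam) 1 = exp (-lam * Fintype.card ι) *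
      ∫ y in positiveOrthant ι, g y * g (1 + y) * exp (-2 * lam * ∑ i, y i) := by
  simp only [autocorrelation, temperedProfile_mul_one_add, integral_const_mul,
    integral_indicator measurableSet_positiveOrthant]

lemma autocorrelation_temperedProfile_smul (hhom : IsPosHomogeneousOn g α (positiveOrthant ι))
    (lam : ℝ) (hu : 0 < u) (v : ι → ℝ) :
    autocorrelation volume (temperedProfile g lam) (u • v) =
      u ^ (2 * α + Fintype.card ι) *
        autocorrelation volume (temperedProfile g (lam * u)) v := by
  rw [autocorrelation_smul _ hu, Module.finrank_fintype_fun_eq_card, rpow_add_natCast hu.ne',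
    mul_comm (u ^ (2 * α)), mul_assoc]
  simp only [autocorrelation, temperedProfile_smul_mul_smul hhom lam hu,
    integral_const_mul]

lemma autocorrelation_temperedProfile_smul_one
    (hhom : IsPosHomogeneousOn g α (positiveOrthant ι)) (lam : ℝ) (hu : 0 < u) :
    autocorrelation volume (temperedProfile g lam) (u • (1 : ι → ℝ)) =
      u ^ (2 * α + Fintype.card ι) * exp (-lam * Fintype.card ι * u) *
        ∫ y in positiveOrthant ι, g y * g (1 + y) * exp (-2 * lam * u * ∑ i, y i) := by
  rw [autocorrelation_temperedProfile_smul hhom lam hu, autocorrelation_temperedProfile_one]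
  ring_nf

lemma abs_mul_exp_neg_sum_le (a : ℝ) (hlam : 0 ≤ lam) {y : ι → ℝ} (hy : y ∈ positiveOrthant ι) :
    |a * exp (-2 * lam * ∑ i, y i)| ≤ |a| := by
  have hsum : 0 ≤ lam * ∑ i, y i := mul_nonneg hlam (Finset.sum_nonneg fun i _ => (hy i).le)
  rw [abs_mul, abs_exp]
  exact mul_le_of_le_one_right (abs_nonneg a) (exp_le_one_iff.2 (by linarith))

lemma integrableOn_mul_exp_neg_sum {F : (ι → ℝ) → ℝ} (hF : IntegrableOn F (positiveOrthant ι))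
    (hlam : 0 ≤ lam) :
    IntegrableOn (fun y => F y * exp (-2 * lam * ∑ i, y i)) (positiveOrthant ι) :=
  Integrable.mono hF (hF.aestronglyMeasurable.mul (by fun_prop))
    ((ae_restrict_mem measurableSet_positiveOrthant).mono fun y hy =>
      abs_mul_exp_neg_sum_le (F y) hlam hy)

variable (hint : IntegrableOn (fun y => g y * g (1 + y)) (positiveOrthant ι))

include hint

lemma integrable_temperedProfile_mul_one_add (hlam : 0 ≤ lam) :
    Integrable fun y => temperedProfile g lam y * temperedProfile g lam (1 + y) := by
  simp only [temperedProfile_mul_one_add]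
  exact ((integrableOn_mul_exp_neg_sum hint hlam).integrable_indicator
    measurableSet_positiveOrthant).const_mul _

lemma integrable_temperedProfile_mul_smul_add
    (hhom : IsPosHomogeneousOn g α (positiveOrthant ι)) (hlam : 0 ≤ lam) (hu : 0 < u) :
    Integrable fun y =>
      temperedProfile g lam y * temperedProfile g lam (u • (1 : ι → ℝ) + y) := by
  rw [integrable_mul_add_smul_iff hu.ne']
  simp only [temperedProfile_smul_mul_smul hhom lam hu]
  exact (integrable_temperedProfile_mul_one_add hint (mul_nonneg hlam hu.le)).const_mul _

lemma abs_autocorrelation_temperedProfile_one_le (hlam : 0 ≤ lam) :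
    |autocorrelation volume (temperedProfile g lam) 1| ≤
      ∫ y in positiveOrthant ι, |g y * g (1 + y)| := by
  have hexp : exp (-lam * Fintype.card ι) ≤ 1 :=
    exp_le_one_iff.2 (mul_nonpos_of_nonpos_of_nonneg (neg_nonpos.2 hlam) (Nat.cast_nonneg _))
  rw [autocorrelation_temperedProfile_one, abs_mul, abs_exp]
  calc exp (-lam * Fintype.card ι) *
        |∫ y in positiveOrthant ι, g y * g (1 + y) * exp (-2 * lam * ∑ i, y i)|
      ≤ |∫ y in positiveOrthant ι, g y * g (1 + y) * exp (-2 * lam * ∑ i, y i)| :=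
        mul_le_of_le_one_left (abs_nonneg _) hexp
    _ ≤ ∫ y in positiveOrthant ι, |g y * g (1 + y) * exp (-2 * lam * ∑ i, y i)| :=
        abs_integral_le_integral_abs
    _ ≤ ∫ y in positiveOrthant ι, |g y * g (1 + y)| :=
        setIntegral_mono_on (integrableOn_mul_exp_neg_sum hint hlam).abs hint.abs
          measurableSet_positiveOrthant fun y hy => abs_mul_exp_neg_sum_le _ hlam hy

lemma integrableOn_autocorrelation_temperedProfile_smul_one (hg : Measurable g)
    (hhom : IsPosHomogeneousOn g α (positiveOrthant ι)) (hα : -1 < 2 * α + Fintype.card ι)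
    (hlam : 0 ≤ lam) (t : ℝ) :
    IntegrableOn (fun u : ℝ => autocorrelation volume (temperedProfile g lam) (u • (1 : ι → ℝ)))
      (Ioc 0 t) := by
  have hpow : IntegrableOn (fun u : ℝ => u ^ (2 * α + Fintype.card ι)) (Ioc 0 t) :=
    (intervalIntegral.intervalIntegrable_rpow' hα).1
  have hmeas := measurable_autocorrelation (μ := volume) (measurable_temperedProfile hg lam)
  refine Integrable.mono' (hpow.mul_const (∫ y in positiveOrthant ι, |g y * g (1 + y)|))
    (hmeas.comp (by fun_prop)).aestronglyMeasurable ?_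
  filter_upwards [ae_restrict_mem measurableSet_Ioc] with u hu
  rw [autocorrelation_temperedProfile_smul hhom lam hu.1, norm_mul,
    norm_of_nonneg (rpow_nonneg hu.1.le _)]
  exact mul_le_mul_of_nonneg_left
    (abs_autocorrelation_temperedProfile_one_le hint (mul_nonneg hlam hu.1.le))
    (rpow_nonneg hu.1.le _)

lemma integrableOn_autocorrelation_abs_temperedProfile_smul_one (hg : Measurable g)
    (hhom : IsPosHomogeneousOn g α (positiveOrthant ι)) (hα : -1 < 2 * α + Fintype.card ι)
    (hlam : 0 ≤ lam) (t : ℝ) :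
    IntegrableOn
      (fun u : ℝ => autocorrelation volume |temperedProfile g lam| (u • (1 : ι → ℝ)))
      (Ioc 0 t) := by
  rw [abs_temperedProfile]
  refine integrableOn_autocorrelation_temperedProfile_smul_one ?_ hg.abs hhom.abs hα hlam t
  simpa only [IntegrableOn, Pi.abs_apply, ← abs_mul] using hint.abs

end TemperedProfile

lemma tghKernel_eq_setIntegral_temperedProfile {k : ℕ} (g : (Fin k → ℝ) → ℝ) (lam t : ℝ)
    (x : Fin k → ℝ) :
    tghKernel g lam t x = ∫ s in Ioc 0 t, temperedProfile g lam (s • 1 - x) := by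
  refine integral_congr_ae (.of_forall fun s => ?_)
  simp [temperedProfile, positiveOrthant, indicator, Pi.sub_def]

theorem stmt1_general {k : ℕ} (α : ℝ) (hα : -((k : ℝ) + 1) / 2 < α)
    (g : (Fin k → ℝ) → ℝ) (hg : Measurable g)
    (hhom : ∀ c : ℝ, 0 < c → ∀ x : Fin k → ℝ, (∀ i, 0 < x i) →
      g (c • x) = c ^ α * g x)
    (hint : IntegrableOn (fun y : Fin k → ℝ => |g y * g (fun i => 1 + y i)|)
      {y : Fin k → ℝ | ∀ i, 0 < y i})
    (lam : ℝ) (hlam : 0 ≤ lam) (t : ℝ) :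
    Integrable (fun x : Fin k → ℝ => (tghKernel g lam t x) ^ 2) ∧
    (∀ u : ℝ, 0 < u →
      IntegrableOn
        (fun y : Fin k → ℝ => g y * g (fun i => 1 + y i) *
          Real.exp (-2 * lam * u * ∑ i, y i))
        {y : Fin k → ℝ | ∀ i, 0 < y i}) ∧
    IntegrableOn
      (fun p : ℝ × ℝ =>
        p.2 ^ (2 * α + (k : ℝ)) * Real.exp (-lam * (k : ℝ) * p.2) *
          ∫ y in {y : Fin k → ℝ | ∀ i, 0 < y i},
            g y * g (fun i => 1 + y i) * Real.exp (-2 * lam * p.2 * ∑ i, y i))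
      {p : ℝ × ℝ | p.1 ∈ Set.Ioc (0 : ℝ) t ∧ p.2 ∈ Set.Ioc (0 : ℝ) (t - p.1)} ∧
    (∫ x : Fin k → ℝ, (tghKernel g lam t x) ^ 2) =
      2 * ∫ s in Set.Ioc (0 : ℝ) t, ∫ u in Set.Ioc (0 : ℝ) (t - s),
        u ^ (2 * α + (k : ℝ)) * Real.exp (-lam * (k : ℝ) * u) *
          ∫ y in {y : Fin k → ℝ | ∀ i, 0 < y i},
            g y * g (fun i => 1 + y i) * Real.exp (-2 * lam * u * ∑ i, y i) := by
  have hprod : IntegrableOn (fun y => g y * g (1 + y)) (positiveOrthant (Fin k)) :=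
    (integrable_norm_iff (by fun_prop)).1 hint
  have hexponent : -1 < 2 * α + Fintype.card (Fin k) := by
    rw [Fintype.card_fin]
    linarith
  have hprofile := measurable_temperedProfile hg lam
  have hline := fun u (hu : 0 < u) =>
    integrable_temperedProfile_mul_smul_add hprod hhom hlam hu
  have habs := integrableOn_autocorrelation_abs_temperedProfile_smul_one hprod hg hhom hexponent
    hlam t
  have hformula := fun u (hu : 0 < u) => autocorrelation_temperedProfile_smul_one hhom lam hu
  rw [Fintype.card_fin] at hformula
  simp only [tghKernel_eq_setIntegral_temperedProfile]
  refine ⟨integrable_sq_setIntegral_smul_sub hprofile hline habs, fun u hu => ?_, ?_, ?_⟩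
  · have hdamped := integrableOn_mul_exp_neg_sum hprod (mul_nonneg hlam hu.le)
    simp only [← mul_assoc] at hdamped
    exact hdamped
  · exact integrableOn_triangle ((integrableOn_autocorrelation_smul hprofile habs).congr_fun
      (fun u hu => hformula u hu.1) measurableSet_Ioc)
  · rw [integral_sq_setIntegral_smul_sub hprofile hline habs]
    exact congrArg (2 * ·) (setIntegral_congr_fun measurableSet_Ioc fun s _ =>
      setIntegral_congr_fun measurableSet_Ioc fun u hu => hformula u hu.1)

theorem stmt1 {k : ℕ} (hk : 1 ≤ k) (α : ℝ)
    (hα₁ : -((k : ℝ) + 1) / 2 < α) (hα₂ : α < -(k : ℝ) / 2)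
    (g : (Fin k → ℝ) → ℝ) (hg : Measurable g)
    (hhom : ∀ c : ℝ, 0 < c → ∀ x : Fin k → ℝ, (∀ i, 0 < x i) →
      g (c • x) = c ^ α * g x)
    (hint : IntegrableOn (fun y : Fin k → ℝ => |g y * g (fun i => 1 + y i)|)
      {y : Fin k → ℝ | ∀ i, 0 < y i})
    (lam : ℝ) (hlam : 0 < lam) (t : ℝ) (ht : 0 ≤ t) :
    -- absolute convergence of all integrals involved
    Integrable (fun x : Fin k → ℝ => (tghKernel g lam t x) ^ 2) ∧
    (∀ u : ℝ, 0 < u →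
      IntegrableOn
        (fun y : Fin k → ℝ => g y * g (fun i => 1 + y i) *
          Real.exp (-2 * lam * u * ∑ i, y i))
        {y : Fin k → ℝ | ∀ i, 0 < y i}) ∧
    IntegrableOn
      (fun p : ℝ × ℝ =>
        p.2 ^ (2 * α + (k : ℝ)) * Real.exp (-lam * (k : ℝ) * p.2) *
          ∫ y in {y : Fin k → ℝ | ∀ i, 0 < y i},
            g y * g (fun i => 1 + y i) * Real.exp (-2 * lam * p.2 * ∑ i, y i))
      {p : ℝ × ℝ | p.1 ∈ Set.Ioc (0 : ℝ) t ∧ p.2 ∈ Set.Ioc (0 : ℝ) (t - p.1)} ∧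
    -- the L² norm identity
    (∫ x : Fin k → ℝ, (tghKernel g lam t x) ^ 2) =
      2 * ∫ s in Set.Ioc (0 : ℝ) t, ∫ u in Set.Ioc (0 : ℝ) (t - s),
        u ^ (2 * α + (k : ℝ)) * Real.exp (-lam * (k : ℝ) * u) *
          ∫ y in {y : Fin k → ℝ | ∀ i, 0 < y i},
            g y * g (fun i => 1 + y i) * Real.exp (-2 * lam * u * ∑ i, y i) :=
  stmt1_general α hα₁ g hg hhom hint lam hlam.le t
end

section
/- Let k ≥ 1, α ∈ (−(k+1)/2, −k/2), and let g : (0,∞)^k → ℝ be measurable with g(c x) = c^α g(x) for all c > 0 and A := ∫_{(0,∞)^k} |g(y) g(1+y)| dy < ∞. Set H = α + 1 + k/2 ∈ (1/2, 1). Then for every λ > 0 there is a constant C = (A / ((α + (k+1)/2)(2α + k + 2)))^{1/2} such that for all s, t ≥ 0, ‖h_t^λ − h_s^λ‖_{L²(ℝ^k)} ≤ C |t − s|^H. -/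
open MeasureTheory Real Set

/-!
Write `h_t(x) = ∫_0^t f(x, u) du`. Expanding the square and using Tonelli,
`‖h_t - h_s‖₂²` is at most the integral over `u, v ∈ (s, t]` of the covariance
`∫ |f(x, u) f(x, v)| dx`. Tempering only decreases this covariance, and the substitution
`x = u·1 - (v - u) y` together with the homogeneity of `g` bounds it by `A (v - u)^(2α + k)`.
The exponent exceeds `-1`, so integrating it twice gives
`2 A (t - s)^(2α + k + 2) / ((2α + k + 1)(2α + k + 2))`, which is the square of the bound.
-/

open Function
open scoped ENNReal

section PowerIntegrals

variable {γ a b u : ℝ}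

lemma setLIntegral_Ioc_sub_const_rpow (hγ : -1 < γ) (hab : a ≤ b) :
    ∫⁻ v in Ioc a b, ENNReal.ofReal ((v - a) ^ γ) =
      ENNReal.ofReal ((b - a) ^ (γ + 1) / (γ + 1)) := by
  have hint : IntervalIntegrable (fun v => (v - a) ^ γ) volume a b := by
    simpa using
      (intervalIntegral.intervalIntegrable_rpow' (a := 0) (b := b - a) hγ).comp_sub_right a
  rw [← ofReal_integral_eq_lintegral_ofReal
      ((intervalIntegrable_iff_integrableOn_Ioc_of_le hab).1 hint)
      ((ae_restrict_mem measurableSet_Ioc).mono fun v hv => rpow_nonneg (sub_nonneg.2 hv.1.le) _),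
    ← intervalIntegral.integral_of_le hab,
    intervalIntegral.integral_comp_sub_right (fun v => v ^ γ), integral_rpow (Or.inl hγ),
    sub_self, zero_rpow (by linarith), sub_zero]

lemma setLIntegral_Ioc_const_sub_rpow (hγ : -1 < γ) (hab : a ≤ b) :
    ∫⁻ v in Ioc a b, ENNReal.ofReal ((b - v) ^ γ) =
      ENNReal.ofReal ((b - a) ^ (γ + 1) / (γ + 1)) := by
  have hint : IntervalIntegrable (fun v => (b - v) ^ γ) volume a b := by
    simpa using
      (intervalIntegral.intervalIntegrable_rpow' (a := b - a) (b := 0) hγ).comp_sub_left b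
  rw [← ofReal_integral_eq_lintegral_ofReal
      ((intervalIntegrable_iff_integrableOn_Ioc_of_le hab).1 hint)
      ((ae_restrict_mem measurableSet_Ioc).mono fun v hv => rpow_nonneg (sub_nonneg.2 hv.2) _),
    ← intervalIntegral.integral_of_le hab,
    intervalIntegral.integral_comp_sub_left (fun v => v ^ γ), integral_rpow (Or.inl hγ),
    sub_self, zero_rpow (by linarith), sub_zero]

lemma setLIntegral_Ioc_abs_sub_rpow (hγ : -1 < γ) (hu : u ∈ Ioc a b) :
    ∫⁻ v in Ioc a b, ENNReal.ofReal (|v - u| ^ γ) =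
      ENNReal.ofReal ((u - a) ^ (γ + 1) / (γ + 1)) +
        ENNReal.ofReal ((b - u) ^ (γ + 1) / (γ + 1)) := by
  rw [← Ioc_union_Ioc_eq_Ioc hu.1.le hu.2,
    lintegral_union measurableSet_Ioc (Ioc_disjoint_Ioc_of_le le_rfl),
    ← setLIntegral_Ioc_const_sub_rpow hγ hu.1.le, ← setLIntegral_Ioc_sub_const_rpow hγ hu.2]
  congr 1
  · refine setLIntegral_congr_fun measurableSet_Ioc fun v hv => ?_
    simp only [abs_of_nonpos (sub_nonpos.2 hv.2), neg_sub]
  · refine setLIntegral_congr_fun measurableSet_Ioc fun v hv => ?_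
    simp only [abs_of_pos (sub_pos.2 hv.1)]

lemma setLIntegral_Ioc_setLIntegral_Ioc_abs_sub_rpow (hγ : -1 < γ) (hab : a ≤ b) :
    ∫⁻ u in Ioc a b, ∫⁻ v in Ioc a b, ENNReal.ofReal (|v - u| ^ γ) =
      ENNReal.ofReal (2 * (b - a) ^ (γ + 2) / ((γ + 1) * (γ + 2))) := by
  have hγ₁ : 0 < γ + 1 := by linarith
  have hinner : 0 ≤ (b - a) ^ (γ + 1 + 1) / (γ + 1 + 1) * (γ + 1)⁻¹ :=
    mul_nonneg (div_nonneg (rpow_nonneg (sub_nonneg.2 hab) _) (by linarith)) (inv_nonneg.2 hγ₁.le)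
  rw [setLIntegral_congr_fun measurableSet_Ioc fun u hu => setLIntegral_Ioc_abs_sub_rpow hγ hu,
    lintegral_add_left (by fun_prop)]
  simp only [div_eq_mul_inv _ (γ + 1), ENNReal.ofReal_mul' (inv_nonneg.2 hγ₁.le)]
  rw [lintegral_mul_const _ (by fun_prop), lintegral_mul_const _ (by fun_prop),
    setLIntegral_Ioc_sub_const_rpow (by linarith) hab,
    setLIntegral_Ioc_const_sub_rpow (by linarith) hab,
    ← ENNReal.ofReal_mul' (inv_nonneg.2 hγ₁.le), ← ENNReal.ofReal_add hinner hinner,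
    show γ + 2 = γ + 1 + 1 by ring]
  congr 1
  field_simp
  ring

end PowerIntegrals

section Covariance

variable {X T : Type*} [MeasurableSpace X] [MeasurableSpace T] {μ : Measure X}

lemma lintegral_sq_lintegral [SFinite μ] {ν : Measure T} [SFinite ν] {F : X → T → ℝ≥0∞}
    (hF : Measurable (uncurry F)) :
    ∫⁻ x, (∫⁻ u, F x u ∂ν) ^ 2 ∂μ = ∫⁻ u, ∫⁻ v, ∫⁻ x, F x u * F x v ∂μ ∂ν ∂ν := by
  have hprod : Measurable fun p : (X × T) × T => F p.1.1 p.1.2 * F p.1.1 p.2 :=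
    (hF.comp measurable_fst).mul
      (hF.comp (g := uncurry F) (f := fun p : (X × T) × T => (p.1.1, p.2)) (by fun_prop))
  calc ∫⁻ x, (∫⁻ u, F x u ∂ν) ^ 2 ∂μ
      = ∫⁻ x, ∫⁻ u, ∫⁻ v, F x u * F x v ∂ν ∂ν ∂μ := by
        refine lintegral_congr fun x => ?_
        have hFx : Measurable (F x) := hF.of_uncurry_left
        simp only [lintegral_const_mul _ hFx, lintegral_mul_const _ hFx, sq]
    _ = ∫⁻ u, ∫⁻ x, ∫⁻ v, F x u * F x v ∂ν ∂μ ∂ν :=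
        lintegral_lintegral_swap hprod.lintegral_prod_right'.aemeasurable
    _ = ∫⁻ u, ∫⁻ v, ∫⁻ x, F x u * F x v ∂μ ∂ν ∂ν := by
        refine lintegral_congr fun u => lintegral_lintegral_swap ?_
        exact (hprod.comp (f := fun p : X × T => ((p.1, u), p.2)) (by fun_prop)).aemeasurable

lemma lintegral_sq_setLIntegral_Ioc_le [SFinite μ] {F : X → ℝ → ℝ≥0∞}
    (hF : Measurable (uncurry F))
    {K : ℝ≥0∞} {γ : ℝ} (hγ : -1 < γ)
    (hcov : ∀ u v, u < v → ∫⁻ x, F x u * F x v ∂μ ≤ K * ENNReal.ofReal ((v - u) ^ γ))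
    {a b : ℝ} (hab : a ≤ b) :
    ∫⁻ x, (∫⁻ u in Ioc a b, F x u) ^ 2 ∂μ ≤
      K * ENNReal.ofReal (2 * (b - a) ^ (γ + 2) / ((γ + 1) * (γ + 2))) := by
  have hcov_abs (u v : ℝ) (huv : v ≠ u) :
      ∫⁻ x, F x u * F x v ∂μ ≤ K * ENNReal.ofReal (|v - u| ^ γ) := by
    rcases huv.lt_or_gt with h | h
    · simpa only [mul_comm, abs_sub_comm v u, abs_of_pos (sub_pos.2 h)] using hcov v u h
    · simpa only [abs_of_pos (sub_pos.2 h)] using hcov u v h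
  calc ∫⁻ x, (∫⁻ u in Ioc a b, F x u) ^ 2 ∂μ
      = ∫⁻ u in Ioc a b, ∫⁻ v in Ioc a b, ∫⁻ x, F x u * F x v ∂μ := lintegral_sq_lintegral hF
    _ ≤ ∫⁻ u in Ioc a b, ∫⁻ v in Ioc a b, K * ENNReal.ofReal (|v - u| ^ γ) := by
        refine lintegral_mono fun u => lintegral_mono_ae ?_
        filter_upwards [Measure.ae_ne (volume.restrict (Ioc a b)) u] with v hv using hcov_abs u v hv
    _ = K * ENNReal.ofReal (2 * (b - a) ^ (γ + 2) / ((γ + 1) * (γ + 2))) := by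
        rw [← setLIntegral_Ioc_setLIntegral_Ioc_abs_sub_rpow hγ hab,
          ← lintegral_const_mul _ (Measurable.lintegral_prod_right' (f := fun p : ℝ × ℝ =>
            ENNReal.ofReal (|p.2 - p.1| ^ γ)) (by fun_prop))]
        exact lintegral_congr fun u => lintegral_const_mul _ (by fun_prop)

variable {G : Type*} [NormedAddCommGroup G] [NormedSpace ℝ G] {f : X → ℝ → G}

lemma enorm_setIntegral_Ioc_sub_le {φ : ℝ → G} {a s t : ℝ} (has : a ≤ s) (hst : s ≤ t)
    (hφ : IntegrableOn φ (Ioc a t)) :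
    ‖(∫ u in Ioc a t, φ u) - ∫ u in Ioc a s, φ u‖ₑ ≤ ∫⁻ u in Ioc s t, ‖φ u‖ₑ := by
  rw [← Ioc_union_Ioc_eq_Ioc has hst, setIntegral_union (Ioc_disjoint_Ioc_of_le le_rfl)
    measurableSet_Ioc (hφ.mono_set (Ioc_subset_Ioc_right hst))
    (hφ.mono_set (Ioc_subset_Ioc_left has)), add_sub_cancel_left]
  exact enorm_integral_le_lintegral_enorm _

lemma eLpNorm_two_setIntegral_Ioc_sub_le (hf : StronglyMeasurable (uncurry f))
    {a s t : ℝ} (has : a ≤ s) (hst : s ≤ t)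
    (hfin : ∫⁻ x, (∫⁻ u in Ioc a t, ‖f x u‖ₑ) ^ 2 ∂μ ≠ ∞) :
    eLpNorm (fun x => (∫ u in Ioc a t, f x u) - ∫ u in Ioc a s, f x u) 2 μ ≤
      (∫⁻ x, (∫⁻ u in Ioc s t, ‖f x u‖ₑ) ^ 2 ∂μ) ^ (1 / 2 : ℝ) := by
  have hmeas : Measurable fun x => (∫⁻ u in Ioc a t, ‖f x u‖ₑ) ^ 2 :=
    (Measurable.lintegral_prod_right' (f := fun p => ‖uncurry f p‖ₑ) hf.enorm).pow_const 2
  rw [eLpNorm_eq_lintegral_rpow_enorm_toReal two_ne_zero ENNReal.ofNat_ne_top,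
    ENNReal.toReal_ofNat]
  refine ENNReal.rpow_le_rpow (lintegral_mono_ae ?_) (by positivity)
  filter_upwards [ae_lt_top hmeas hfin] with x hx
  have hint : IntegrableOn (f x) (Ioc a t) :=
    ⟨hf.of_uncurry_left.aestronglyMeasurable,
      (ENNReal.pow_lt_top_iff.1 hx).resolve_right two_ne_zero⟩
  rw [ENNReal.rpow_two]
  gcongr
  exact enorm_setIntegral_Ioc_sub_le has hst hint

theorem eLpNorm_two_setIntegral_Ioc_sub_le_of_covariance_le [SFinite μ]
    (hf : StronglyMeasurable (uncurry f)) {A γ : ℝ} (hA : 0 ≤ A) (hγ : -1 < γ)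
    (hcov : ∀ u v, u < v →
      ∫⁻ x, ‖f x u‖ₑ * ‖f x v‖ₑ ∂μ ≤ ENNReal.ofReal A * ENNReal.ofReal ((v - u) ^ γ))
    {a s t : ℝ} (has : a ≤ s) (hat : a ≤ t) :
    eLpNorm (fun x => (∫ u in Ioc a t, f x u) - ∫ u in Ioc a s, f x u) 2 μ ≤
      ENNReal.ofReal (√(2 * A / ((γ + 1) * (γ + 2))) * |t - s| ^ ((γ + 2) / 2)) := by
  wlog hst : s ≤ t generalizing s t
  · rw [abs_sub_comm]
    exact (eLpNorm_sub_comm (fun x => ∫ u in Ioc a t, f x u) (fun x => ∫ u in Ioc a s, f x u) 2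
      μ).trans_le (this hat has (le_of_not_ge hst))
  have hγ₁ : 0 < γ + 1 := by linarith
  have hγ₂ : 0 < γ + 2 := by linarith
  have hts : 0 ≤ t - s := sub_nonneg.2 hst
  have hsq {c d : ℝ} (hcd : c ≤ d) := lintegral_sq_setLIntegral_Ioc_le hf.enorm hγ hcov hcd
  have hfin : ∫⁻ x, (∫⁻ u in Ioc a t, ‖f x u‖ₑ) ^ 2 ∂μ ≠ ∞ :=
    ((hsq hat).trans_lt (ENNReal.mul_lt_top ENNReal.ofReal_lt_top ENNReal.ofReal_lt_top)).ne
  calc eLpNorm (fun x => (∫ u in Ioc a t, f x u) - ∫ u in Ioc a s, f x u) 2 μ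
      ≤ (∫⁻ x, (∫⁻ u in Ioc s t, ‖f x u‖ₑ) ^ 2 ∂μ) ^ (1 / 2 : ℝ) :=
        eLpNorm_two_setIntegral_Ioc_sub_le hf has hst hfin
    _ ≤ (ENNReal.ofReal A *
          ENNReal.ofReal (2 * (t - s) ^ (γ + 2) / ((γ + 1) * (γ + 2)))) ^ (1 / 2 : ℝ) := by
        gcongr
        exact hsq hst
    _ = ENNReal.ofReal (√(2 * A / ((γ + 1) * (γ + 2)) * (t - s) ^ (γ + 2))) := by
        rw [← ENNReal.ofReal_mul hA, ENNReal.ofReal_rpow_of_nonneg (by positivity) (by positivity),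
          ← sqrt_eq_rpow]
        congr 2
        ring
    _ = ENNReal.ofReal (√(2 * A / ((γ + 1) * (γ + 2))) * |t - s| ^ ((γ + 2) / 2)) := by
        rw [sqrt_mul (by positivity), sqrt_eq_rpow ((t - s) ^ (γ + 2)), ← rpow_mul hts,
          abs_of_nonneg hts, mul_one_div]

end Covariance

section Scaling

variable {E : Type*} [NormedAddCommGroup E] [NormedSpace ℝ E] [MeasurableSpace E] [BorelSpace E]
  [FiniteDimensional ℝ E]

lemma lintegral_eq_mul_lintegral_comp_sub_smul (μ : Measure E) [μ.IsAddHaarMeasure]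
    (f : E → ℝ≥0∞) (w : E) {c : ℝ} (hc : c ≠ 0) :
    ∫⁻ x, f x ∂μ = ENNReal.ofReal |c ^ Module.finrank ℝ E| * ∫⁻ y, f (w - c • y) ∂μ := by
  have hdet : 0 < |c ^ Module.finrank ℝ E| := abs_pos.2 (pow_ne_zero _ hc)
  have hscale : ∫⁻ y, f (w - c • y) ∂μ =
      ENNReal.ofReal |c ^ Module.finrank ℝ E|⁻¹ * ∫⁻ y, f (w - y) ∂μ := by
    rw [← abs_inv, ← smul_eq_mul, ← lintegral_smul_measure, ← Measure.map_addHaar_smul μ hc]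
    exact ((measurableEmbedding_const_smul₀ hc).lintegral_map fun y => f (w - y)).symm
  rw [hscale, ← mul_assoc, ← ENNReal.ofReal_mul hdet.le, mul_inv_cancel₀ hdet.ne',
    ENNReal.ofReal_one, one_mul, lintegral_sub_left_eq_self]

end Scaling

section Kernel

lemma measurableSet_setOf_forall_lt {X κ : Type*} [MeasurableSpace X] [Countable κ]
    {p q : κ → X → ℝ} (hp : ∀ i, Measurable (p i)) (hq : ∀ i, Measurable (q i)) :
    MeasurableSet {x | ∀ i, p i x < q i x} := by
  simpa only [ofPred_forall] using MeasurableSet.iInter fun i => measurableSet_lt (hp i) (hq i)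

variable {ι : Type*} [Fintype ι] {α lam : ℝ} {g : (ι → ℝ) → ℝ}

/-- The integrand `s ↦ g(s·1 - x) exp(-λ ∑ᵢ (s - xᵢ)) 1_{x < s}` whose time integral over `(0, t]`
is the kernel `h_t^λ(x)`, over an arbitrary finite index type. -/
noncomputable def tghIntegrand (g : (ι → ℝ) → ℝ) (lam : ℝ) (x : ι → ℝ) : ℝ → ℝ :=
  indicator {s | ∀ i, x i < s} fun s => g (fun i => s - x i) * exp (-lam * ∑ i, (s - x i))

lemma measurable_uncurry_tghIntegrand (hg : Measurable g) (lam : ℝ) :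
    Measurable (uncurry (tghIntegrand g lam)) := by
  have hval : Measurable fun p : (ι → ℝ) × ℝ =>
      g (fun i => p.2 - p.1 i) * exp (-lam * ∑ i, (p.2 - p.1 i)) :=
    (hg.comp (by fun_prop)).mul (by fun_prop)
  exact hval.indicator (measurableSet_setOf_forall_lt (p := fun i (p : (ι → ℝ) × ℝ) => p.1 i)
    (q := fun _ p => p.2) (by fun_prop) (by fun_prop))

lemma tghIntegrand_of_not_forall_lt {x : ι → ℝ} {s : ℝ} (h : ¬∀ i, x i < s) :
    tghIntegrand g lam x s = 0 :=
  indicator_of_notMem (s := {s | ∀ i, x i < s}) h _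

lemma enorm_tghIntegrand_le (hlam : 0 ≤ lam) {x : ι → ℝ} {s : ℝ} (h : ∀ i, x i < s) :
    ‖tghIntegrand g lam x s‖ₑ ≤ ‖g fun i => s - x i‖ₑ := by
  have hsum : 0 ≤ ∑ i, (s - x i) := Finset.sum_nonneg fun i _ => (sub_pos.2 (h i)).le
  rw [tghIntegrand, indicator_of_mem (by exact h), enorm_mul]
  refine mul_le_of_le_one_right' ?_
  rw [enorm_of_nonneg (exp_pos _).le, ENNReal.ofReal_le_one, exp_le_one_iff, neg_mul, neg_nonpos]
  exact mul_nonneg hlam hsum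

lemma enorm_tghIntegrand_mul_le (hlam : 0 ≤ lam)
    (hhom : ∀ c : ℝ, 0 < c → ∀ x : ι → ℝ, (∀ i, 0 < x i) → g (c • x) = c ^ α * g x)
    {c : ℝ} (hc : 0 < c) (u : ℝ) (y : ι → ℝ) :
    ‖tghIntegrand g lam (fun i => u - c * y i) u‖ₑ *
        ‖tghIntegrand g lam (fun i => u - c * y i) (u + c)‖ₑ ≤
      ENNReal.ofReal (c ^ (2 * α)) *
        {y : ι → ℝ | ∀ i, 0 < y i}.indicator (fun y => ‖g y * g (fun i => 1 + y i)‖ₑ) y := by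
  have hlt_iff : (∀ i, u - c * y i < u) ↔ ∀ i, 0 < y i := by
    simp only [sub_lt_self_iff, mul_pos_iff_of_pos_left hc]
  by_cases hy : ∀ i, 0 < y i
  · have hu := hlt_iff.2 hy
    have hy₁ : ∀ i, 0 < 1 + y i := fun i => add_pos one_pos (hy i)
    have hdiff : (fun i => u - (u - c * y i)) = c • y := by
      ext i
      simp only [sub_sub_cancel, Pi.smul_apply, smul_eq_mul]
    have hdiff₁ : (fun i => u + c - (u - c * y i)) = c • fun i => 1 + y i := by
      ext i
      simp only [Pi.smul_apply, smul_eq_mul]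
      ring
    calc _ ≤ ‖g (c • y)‖ₑ * ‖g (c • fun i => 1 + y i)‖ₑ := by
          rw [← hdiff, ← hdiff₁]
          exact mul_le_mul' (enorm_tghIntegrand_le hlam hu)
            (enorm_tghIntegrand_le hlam fun i => (hu i).trans (lt_add_of_pos_right u hc))
      _ = ‖c ^ (2 * α) * (g y * g fun i => 1 + y i)‖ₑ := by
          rw [hhom c hc y hy, hhom c hc _ hy₁, ← enorm_mul, two_mul, rpow_add hc]
          congr 1
          ring
      _ = _ := by
          rw [indicator_of_mem (by exact hy), enorm_mul, enorm_of_nonneg (by positivity)]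
  · rw [tghIntegrand_of_not_forall_lt (mt hlt_iff.1 hy), enorm_zero, zero_mul]
    exact zero_le

lemma lintegral_enorm_tghIntegrand_mul_le (hlam : 0 ≤ lam)
    (hhom : ∀ c : ℝ, 0 < c → ∀ x : ι → ℝ, (∀ i, 0 < x i) → g (c • x) = c ^ α * g x)
    {u v : ℝ} (huv : u < v) :
    ∫⁻ x, ‖tghIntegrand g lam x u‖ₑ * ‖tghIntegrand g lam x v‖ₑ ≤
      (∫⁻ y in {y : ι → ℝ | ∀ i, 0 < y i}, ‖g y * g (fun i => 1 + y i)‖ₑ) *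
        ENNReal.ofReal ((v - u) ^ (2 * α + Fintype.card ι)) := by
  obtain ⟨c, rfl⟩ : ∃ c, v = u + c := ⟨v - u, by ring⟩
  have hc : 0 < c := by simpa using huv
  have hck : 0 < c ^ Fintype.card ι := pow_pos hc _
  rw [lintegral_eq_mul_lintegral_comp_sub_smul volume _ (fun _ => u) hc.ne',
    Module.finrank_fintype_fun_eq_card, abs_of_pos hck, add_sub_cancel_left]
  calc _ ≤ ENNReal.ofReal (c ^ Fintype.card ι) * ∫⁻ y, ENNReal.ofReal (c ^ (2 * α)) *
          {y : ι → ℝ | ∀ i, 0 < y i}.indicator (fun y => ‖g y * g (fun i => 1 + y i)‖ₑ) y :=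
        mul_le_mul_right (lintegral_mono fun y => enorm_tghIntegrand_mul_le hlam hhom hc u y) _
    _ = _ := by
        rw [lintegral_const_mul' _ _ ENNReal.ofReal_ne_top, lintegral_indicator
          (measurableSet_setOf_forall_lt (by fun_prop) (by fun_prop)), ← mul_assoc,
          ← ENNReal.ofReal_mul hck.le, mul_comm, mul_comm (c ^ _), rpow_add hc, rpow_natCast]

end Kernel

theorem stmt7_general {k : ℕ} (α : ℝ) (hα : -((k : ℝ) + 1) / 2 < α)
    (g : (Fin k → ℝ) → ℝ) (hg : Measurable g)
    (hhom : ∀ c : ℝ, 0 < c → ∀ x : Fin k → ℝ, (∀ i, 0 < x i) →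
      g (c • x) = c ^ α * g x)
    (hint : IntegrableOn (fun y : Fin k → ℝ => |g y * g (fun i => 1 + y i)|)
      {y : Fin k → ℝ | ∀ i, 0 < y i})
    (lam : ℝ) (hlam : 0 ≤ lam) (s t : ℝ) (hs : 0 ≤ s) (ht : 0 ≤ t) :
    eLpNorm (fun x : Fin k → ℝ => tghKernel g lam t x - tghKernel g lam s x) 2
        (volume : Measure (Fin k → ℝ)) ≤
      ENNReal.ofReal
        (Real.sqrt ((∫ y in {y : Fin k → ℝ | ∀ i, 0 < y i},
            |g y * g (fun i => 1 + y i)|) /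
          ((α + ((k : ℝ) + 1) / 2) * (2 * α + (k : ℝ) + 2))) *
          |t - s| ^ (α + 1 + (k : ℝ) / 2)) := by
  set A := ∫ y in {y : Fin k → ℝ | ∀ i, 0 < y i}, |g y * g (fun i => 1 + y i)|
  have hA : 0 ≤ A := integral_nonneg fun _ => abs_nonneg _
  have hA_eq : ∫⁻ y in {y : Fin k → ℝ | ∀ i, 0 < y i}, ‖g y * g (fun i => 1 + y i)‖ₑ =
      ENNReal.ofReal A := by
    simp only [A, ofReal_integral_eq_lintegral_ofReal hint (ae_of_all _ fun _ => abs_nonneg _),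
      enorm_eq_ofReal_abs]
  have hcov (u v : ℝ) (huv : u < v) :
      ∫⁻ x, ‖tghIntegrand g lam x u‖ₑ * ‖tghIntegrand g lam x v‖ₑ ≤
        ENNReal.ofReal A * ENNReal.ofReal ((v - u) ^ (2 * α + k)) := by
    simpa only [hA_eq, Fintype.card_fin] using lintegral_enorm_tghIntegrand_mul_le hlam hhom huv
  have hconst : A / ((α + ((k : ℝ) + 1) / 2) * (2 * α + k + 2)) =
      2 * A / ((2 * α + k + 1) * (2 * α + k + 2)) := by
    rw [← mul_div_mul_left _ _ two_ne_zero]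
    ring_nf
  rw [hconst, show α + 1 + (k : ℝ) / 2 = (2 * α + k + 2) / 2 by ring]
  exact eLpNorm_two_setIntegral_Ioc_sub_le_of_covariance_le
    (measurable_uncurry_tghIntegrand hg lam).stronglyMeasurable hA (by linarith) hcov hs ht

theorem stmt7 {k : ℕ} (hk : 1 ≤ k) (α : ℝ)
    (hα₁ : -((k : ℝ) + 1) / 2 < α) (hα₂ : α < -(k : ℝ) / 2)
    (g : (Fin k → ℝ) → ℝ) (hg : Measurable g)
    (hhom : ∀ c : ℝ, 0 < c → ∀ x : Fin k → ℝ, (∀ i, 0 < x i) →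
      g (c • x) = c ^ α * g x)
    (hint : IntegrableOn (fun y : Fin k → ℝ => |g y * g (fun i => 1 + y i)|)
      {y : Fin k → ℝ | ∀ i, 0 < y i})
    (lam : ℝ) (hlam : 0 < lam) (s t : ℝ) (hs : 0 ≤ s) (ht : 0 ≤ t) :
    eLpNorm (fun x : Fin k → ℝ => tghKernel g lam t x - tghKernel g lam s x) 2
        (volume : Measure (Fin k → ℝ)) ≤
      ENNReal.ofReal
        (Real.sqrt ((∫ y in {y : Fin k → ℝ | ∀ i, 0 < y i},
            |g y * g (fun i => 1 + y i)|) /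
          ((α + ((k : ℝ) + 1) / 2) * (2 * α + (k : ℝ) + 2))) *
          |t - s| ^ (α + 1 + (k : ℝ) / 2)) :=
  stmt7_general α hα₁ g hg hhom hint lam hlam.le s t hs ht
end

section
/- Let ρ ∈ (−1, 0) and let β satisfy −ρ/2 − 1 < β < −ρ/2 with β ≠ 0. For t > 0 set l_t^β(s) = ((t−s)_+^β − (−s)_+^β)/β. Then ∫_ℝ ∫_0^∞ |l_t^β(s)| · |l_t^β(s+u)| · u^ρ du ds < ∞. -/
open MeasureTheory Real Set

/-- The fractional filter `l_t^β(s) = ((t−s)₊^β − (−s)₊^β)/β`. -/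
noncomputable def ell (t b s : ℝ) : ℝ :=
  ((max (t - s) 0) ^ b - (max (-s) 0) ^ b) / b

/-!
The double integral is a Young-type trilinear form `∬ f(s) f(s + u) k(u)` with `f = |l_t^β|` and
`k(u) = u^ρ`. When `2/p + 1/r = 2`, the integrand is a weighted geometric mean of the products
`f(s)^p f(s + u)^p`, `f(s)^p k(u)^r` and `f(s + u)^p k(u)^r`, hence at most their sum, so the form
is finite for `f ∈ L^p` and `k ∈ L^r`. The power `u^ρ` lies in `L^r` near `0` for `r < -1/ρ` and
near `∞` for `r > -1/ρ`, so it suffices that `f` belongs to `L^p` for all `p` near the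
Hardy–Littlewood–Sobolev exponent `2/(ρ + 2)`. Since `f` is `O(|s|^(β-1))` at `-∞` and has
singularities of order `β` at `0` and `t`, it is in `L^p` as soon as `-1 < β p < p - 1`, an open
condition on `p` which at `p = 2/(ρ + 2)` reads `-ρ/2 - 1 < β < -ρ/2`.
-/

open scoped ENNReal Topology

theorem mul_mul_le_rpow_mul_rpow_add_add {p q r : ℝ} (hp : 1 ≤ p) (hq : 1 ≤ q) (hr : 1 ≤ r)
    (hpqr : p⁻¹ + q⁻¹ + r⁻¹ = 2) (x y z : ℝ≥0∞) :
    x * y * z ≤ x ^ p * y ^ q + x ^ p * z ^ r + y ^ q * z ^ r := by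
  have hp' : 0 ≤ 1 - p⁻¹ := sub_nonneg.2 (inv_le_one_of_one_le₀ hp)
  have hq' : 0 ≤ 1 - q⁻¹ := sub_nonneg.2 (inv_le_one_of_one_le₀ hq)
  have hr' : 0 ≤ 1 - r⁻¹ := sub_nonneg.2 (inv_le_one_of_one_le₀ hr)
  have split_rpow {a c d : ℝ} (ha : 1 ≤ a) (hc : 0 ≤ c) (hd : 0 ≤ d) (h : c + d = a⁻¹)
      (w : ℝ≥0∞) : w = (w ^ a) ^ c * (w ^ a) ^ d := by
    rw [← ENNReal.rpow_add_of_nonneg c d hc hd, h, ENNReal.rpow_rpow_inv (by positivity)]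
  set M := x ^ p * y ^ q + x ^ p * z ^ r + y ^ q * z ^ r
  calc x * y * z
      = (x ^ p * y ^ q) ^ (1 - r⁻¹) * (x ^ p * z ^ r) ^ (1 - q⁻¹) *
          (y ^ q * z ^ r) ^ (1 - p⁻¹) := by
        conv_lhs => rw [split_rpow hp hr' hq' (by linarith) x,
          split_rpow hq hr' hp' (by linarith) y, split_rpow hr hq' hp' (by linarith) z]
        simp only [ENNReal.mul_rpow_of_nonneg _ _ hp', ENNReal.mul_rpow_of_nonneg _ _ hq',
          ENNReal.mul_rpow_of_nonneg _ _ hr']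
        ring
    _ ≤ M ^ (1 - r⁻¹) * M ^ (1 - q⁻¹) * M ^ (1 - p⁻¹) := by
        gcongr
        · exact le_self_add.trans le_self_add
        · exact le_add_self.trans le_self_add
        · exact le_add_self
    _ = M := by
        rw [← ENNReal.rpow_add_of_nonneg _ _ hr' hq',
          ← ENNReal.rpow_add_of_nonneg _ _ (add_nonneg hr' hq') hp',
          show 1 - r⁻¹ + (1 - q⁻¹) + (1 - p⁻¹) = 1 by linarith, ENNReal.rpow_one]

section Young

variable {G : Type*} [MeasurableSpace G] [AddGroup G] [MeasurableAdd₂ G] {μ : Measure G}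

theorem lintegral_setLIntegral_mul_add_le [μ.IsAddLeftInvariant] {f g : G → ℝ≥0∞}
    (hf : Measurable f) (hg : Measurable g) (A : Set G) :
    ∫⁻ s, ∫⁻ u in A, f s * g (s + u) ∂μ ∂μ ≤ (∫⁻ s, f s ∂μ) * ∫⁻ u, g u ∂μ :=
  calc ∫⁻ s, ∫⁻ u in A, f s * g (s + u) ∂μ ∂μ
      ≤ ∫⁻ s, ∫⁻ u, f s * g (s + u) ∂μ ∂μ :=
        lintegral_mono fun s => setLIntegral_le_lintegral A _
    _ = ∫⁻ s, f s * ∫⁻ u, g u ∂μ ∂μ := by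
        refine lintegral_congr fun s => ?_
        rw [lintegral_const_mul _ (by fun_prop), lintegral_add_left_eq_self g s]
    _ = (∫⁻ s, f s ∂μ) * ∫⁻ u, g u ∂μ := lintegral_mul_const _ hf

theorem lintegral_setLIntegral_add_mul [SFinite μ] [μ.IsAddRightInvariant] {g k : G → ℝ≥0∞}
    (hg : Measurable g) (hk : Measurable k) (A : Set G) :
    ∫⁻ s, ∫⁻ u in A, g (s + u) * k u ∂μ ∂μ = (∫⁻ s, g s ∂μ) * ∫⁻ u in A, k u ∂μ :=
  calc ∫⁻ s, ∫⁻ u in A, g (s + u) * k u ∂μ ∂μ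
      = ∫⁻ u in A, ∫⁻ s, g (s + u) * k u ∂μ ∂μ := lintegral_lintegral_swap (by fun_prop)
    _ = ∫⁻ u in A, (∫⁻ s, g s ∂μ) * k u ∂μ := by
        refine lintegral_congr fun u => ?_
        rw [lintegral_mul_const _ (by fun_prop), lintegral_add_right_eq_self g u]
    _ = (∫⁻ s, g s ∂μ) * ∫⁻ u in A, k u ∂μ := lintegral_const_mul _ hk

theorem lintegral_setLIntegral_mul_add_mul_lt_top [SFinite μ] [μ.IsAddLeftInvariant]
    [μ.IsAddRightInvariant] {p q r : ℝ} (hp : 1 ≤ p) (hq : 1 ≤ q) (hr : 1 ≤ r)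
    (hpqr : p⁻¹ + q⁻¹ + r⁻¹ = 2) {f g k : G → ℝ≥0∞} (hf : Measurable f) (hg : Measurable g)
    (hk : Measurable k) (A : Set G) (hfp : ∫⁻ s, f s ^ p ∂μ < ∞) (hgq : ∫⁻ s, g s ^ q ∂μ < ∞)
    (hkr : ∫⁻ u in A, k u ^ r ∂μ < ∞) :
    ∫⁻ s, ∫⁻ u in A, f s * g (s + u) * k u ∂μ ∂μ < ∞ := by
  have hfg : ∫⁻ s, ∫⁻ u in A, f s ^ p * g (s + u) ^ q ∂μ ∂μ < ∞ :=
    (lintegral_setLIntegral_mul_add_le (hf.pow_const p) (hg.pow_const q) A).trans_lt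
      (ENNReal.mul_lt_top hfp hgq)
  have hfk : ∫⁻ s, ∫⁻ u in A, f s ^ p * k u ^ r ∂μ ∂μ < ∞ := by
    rw [lintegral_lintegral_mul (by fun_prop) (by fun_prop)]
    exact ENNReal.mul_lt_top hfp hkr
  have hgk : ∫⁻ s, ∫⁻ u in A, g (s + u) ^ q * k u ^ r ∂μ ∂μ < ∞ := by
    rw [lintegral_setLIntegral_add_mul (hg.pow_const q) (hk.pow_const r)]
    exact ENNReal.mul_lt_top hgq hkr
  calc ∫⁻ s, ∫⁻ u in A, f s * g (s + u) * k u ∂μ ∂μ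
      ≤ ∫⁻ s, ∫⁻ u in A, f s ^ p * g (s + u) ^ q + f s ^ p * k u ^ r +
          g (s + u) ^ q * k u ^ r ∂μ ∂μ :=
        lintegral_mono fun s => lintegral_mono fun u =>
          mul_mul_le_rpow_mul_rpow_add_add hp hq hr hpqr _ _ _
    _ = (∫⁻ s, ∫⁻ u in A, f s ^ p * g (s + u) ^ q ∂μ ∂μ) +
          (∫⁻ s, ∫⁻ u in A, f s ^ p * k u ^ r ∂μ ∂μ) +
          ∫⁻ s, ∫⁻ u in A, g (s + u) ^ q * k u ^ r ∂μ ∂μ := by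
        rw [← lintegral_add_left (by fun_prop), ← lintegral_add_left (by fun_prop)]
        refine lintegral_congr fun s => ?_
        rw [lintegral_add_left (by fun_prop), lintegral_add_left (by fun_prop)]
    _ < ∞ := by finiteness

end Young

theorem two_sub_two_div_pos {p : ℝ} (hp : 1 < p) : 0 < 2 - 2 / p :=
  sub_pos.2 (div_lt_self two_pos hp)

theorem setLIntegral_ofReal_rpow_rpow_lt_top {ρ r : ℝ} {A : Set ℝ} (hA : MeasurableSet A)
    (hA0 : A ⊆ Ioi 0) (h : IntegrableOn (fun u : ℝ => u ^ (ρ * r)) A) (hr : 0 ≤ r) :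
    ∫⁻ u in A, ENNReal.ofReal (u ^ ρ) ^ r < ∞ := by
  refine lt_of_eq_of_lt (setLIntegral_congr_fun hA fun u hu => ?_) h.lintegral_lt_top
  have hu0 : 0 ≤ u := (hA0 hu).le
  rw [ENNReal.ofReal_rpow_of_nonneg (rpow_nonneg hu0 _) hr, ← rpow_mul hu0]

theorem lintegral_setLIntegral_mul_add_mul_rpow_lt_top {ρ p : ℝ} (hp1 : 1 < p) (hp2 : p ≤ 2)
    {f g : ℝ → ℝ≥0∞} (hf : Measurable f) (hg : Measurable g) {A : Set ℝ} (hA : MeasurableSet A)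
    (hA0 : A ⊆ Ioi 0) (hkr : IntegrableOn (fun u : ℝ => u ^ (ρ * (2 - 2 / p)⁻¹)) A)
    (hfp : ∫⁻ s, f s ^ p < ∞) (hgp : ∫⁻ s, g s ^ p < ∞) :
    ∫⁻ s, ∫⁻ u in A, f s * g (s + u) * ENNReal.ofReal (u ^ ρ) < ∞ := by
  have hr0 : 0 < 2 - 2 / p := two_sub_two_div_pos hp1
  have hr1 : 2 - 2 / p ≤ 1 := by
    have : 1 ≤ 2 / p := (one_le_div (by linarith)).2 hp2
    linarith
  exact lintegral_setLIntegral_mul_add_mul_lt_top hp1.le hp1.le ((one_le_inv₀ hr0).2 hr1)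
    (by rw [inv_inv]; ring) hf hg (by fun_prop) A hfp hgp
    (setLIntegral_ofReal_rpow_rpow_lt_top hA hA0 hkr (inv_nonneg.2 hr0.le))

theorem lintegral_setLIntegral_Ioi_mul_add_mul_rpow_lt_top {ρ p q : ℝ} (hp1 : 1 < p)
    (hpρ : p < 2 / (ρ + 2)) (hqρ : 2 / (ρ + 2) < q) (hq2 : q ≤ 2) {f g : ℝ → ℝ≥0∞}
    (hf : Measurable f) (hg : Measurable g) (hfp : ∫⁻ s, f s ^ p < ∞) (hgp : ∫⁻ s, g s ^ p < ∞)
    (hfq : ∫⁻ s, f s ^ q < ∞) (hgq : ∫⁻ s, g s ^ q < ∞) :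
    ∫⁻ s, ∫⁻ u in Ioi 0, f s * g (s + u) * ENNReal.ofReal (u ^ ρ) < ∞ := by
  have hρ : 0 < ρ + 2 := (div_pos_iff_of_pos_left two_pos).1 (by linarith)
  have hzero : IntegrableOn (fun u : ℝ => u ^ (ρ * (2 - 2 / q)⁻¹)) (Ioc 0 1) := by
    have hq : 0 < 2 - 2 / q := two_sub_two_div_pos (by linarith)
    have hexp : -1 < ρ * (2 - 2 / q)⁻¹ := by
      have : 2 / q < ρ + 2 := (div_lt_comm₀ hρ (by linarith)).1 hqρ
      rw [← div_eq_mul_inv, lt_div_iff₀ hq]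
      linarith
    exact (intervalIntegrable_iff_integrableOn_Ioc_of_le zero_le_one).1
      (intervalIntegral.intervalIntegrable_rpow' hexp)
  have htop : IntegrableOn (fun u : ℝ => u ^ (ρ * (2 - 2 / p)⁻¹)) (Ioi 1) := by
    have hp : 0 < 2 - 2 / p := two_sub_two_div_pos hp1
    have hexp : ρ * (2 - 2 / p)⁻¹ < -1 := by
      have : ρ + 2 < 2 / p := (lt_div_comm₀ (by linarith) hρ).1 hpρ
      rw [← div_eq_mul_inv, div_lt_iff₀ hp]
      linarith
    exact integrableOn_Ioi_rpow_of_lt hexp one_pos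
  calc ∫⁻ s, ∫⁻ u in Ioi 0, f s * g (s + u) * ENNReal.ofReal (u ^ ρ)
      = (∫⁻ s, ∫⁻ u in Ioc 0 1, f s * g (s + u) * ENNReal.ofReal (u ^ ρ)) +
          ∫⁻ s, ∫⁻ u in Ioi 1, f s * g (s + u) * ENNReal.ofReal (u ^ ρ) := by
        rw [← lintegral_add_left (by fun_prop)]
        refine lintegral_congr fun s => ?_
        rw [← Ioc_union_Ioi_eq_Ioi zero_le_one,
          lintegral_union measurableSet_Ioi (Ioc_disjoint_Ioi le_rfl)]
    _ < ∞ := ENNReal.add_lt_top.2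
      ⟨lintegral_setLIntegral_mul_add_mul_rpow_lt_top (by linarith) hq2 hf hg measurableSet_Ioc
          Ioc_subset_Ioi_self hzero hfq hgq,
        lintegral_setLIntegral_mul_add_mul_rpow_lt_top hp1 (by linarith) hf hg measurableSet_Ioi
          (Ioi_subset_Ioi zero_le_one) htop hfp hgp⟩

theorem measurable_ell (t b : ℝ) : Measurable (ell t b) := by
  unfold ell
  fun_prop

theorem abs_ell_le_of_neg {t b s : ℝ} (ht : 0 ≤ t) (hb : b ≠ 0) (hb1 : b ≤ 1) (hs : s < 0) :
    |ell t b s| ≤ t * (-s) ^ (b - 1) := by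
  have hs0 : 0 < -s := neg_pos.2 hs
  have hderiv : ∀ x ∈ Ici (-s),
      HasDerivWithinAt (fun x : ℝ => x ^ b / b) (x ^ (b - 1)) (Ici (-s)) x := fun x hx => by
    have hx0 : x ≠ 0 := (hs0.trans_le hx).ne'
    simpa [mul_div_cancel_left₀ _ hb] using
      ((hasDerivAt_rpow_const (p := b) (.inl hx0)).div_const b).hasDerivWithinAt
  have hbound : ∀ x ∈ Ici (-s), ‖x ^ (b - 1)‖ ≤ (-s) ^ (b - 1) := fun x hx => by
    rw [norm_of_nonneg (rpow_nonneg (hs0.le.trans hx) _)]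
    exact rpow_le_rpow_of_nonpos hs0 hx (by linarith)
  have hmvt := (convex_Ici (-s)).norm_image_sub_le_of_norm_hasDerivWithin_le hderiv hbound
    self_mem_Ici (show t - s ∈ Ici (-s) by simp [ht])
  rw [ell, max_eq_left (by linarith), max_eq_left hs0.le, sub_div, mul_comm]
  simpa [abs_of_nonneg ht] using hmvt

theorem integrableOn_Ioi_max_sub_rpow {r : ℝ} (hr : -1 < r) (hr0 : r ≠ 0) (a c : ℝ) :
    IntegrableOn (fun s : ℝ => max (a - s) 0 ^ r) (Ioi c) := by
  have hIoc : IntegrableOn (fun s : ℝ => max (a - s) 0 ^ r) (Ioc c a) := by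
    refine IntegrableOn.congr_fun ?_ (fun s hs => ?_) measurableSet_Ioc
      (f := fun s => (a - s) ^ r)
    · exact ((intervalIntegral.intervalIntegrable_rpow' hr).comp_sub_left a
        (a := a - c) (b := 0)).1.mono_set (by simp)
    · rw [max_eq_left (sub_nonneg.2 hs.2)]
  refine hIoc.of_forall_sdiff_eq_zero measurableSet_Ioi fun s hs => ?_
  have has : a < s := not_le.1 fun h => hs.2 ⟨hs.1, h⟩
  rw [max_eq_right (by linarith), zero_rpow hr0]

theorem memLp_max_sub_rpow {b p : ℝ} (hb : b ≠ 0) (hp : 0 < p) (hbp : -1 < b * p) (a c : ℝ) :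
    MemLp (fun s : ℝ => max (a - s) 0 ^ b) (ENNReal.ofReal p) (volume.restrict (Ioi c)) := by
  rw [← integrable_norm_rpow_iff (by fun_prop : Measurable _).aestronglyMeasurable
    (by simpa using hp) ENNReal.ofReal_ne_top, ENNReal.toReal_ofReal hp.le]
  refine (integrableOn_Ioi_max_sub_rpow hbp (mul_ne_zero hb hp.ne') a c).congr
    (ae_of_all _ fun s => ?_)
  have h0 : 0 ≤ max (a - s) 0 := le_max_right _ _
  simp only [norm_of_nonneg (rpow_nonneg h0 _), rpow_mul h0]

theorem setLIntegral_Ioi_enorm_ell_rpow_lt_top {b p : ℝ} (hb : b ≠ 0) (hp : 0 < p)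
    (hbp : -1 < b * p) (t c : ℝ) : ∫⁻ s in Ioi c, ‖ell t b s‖ₑ ^ p < ∞ := by
  have hmem : MemLp (ell t b) (ENNReal.ofReal p) (volume.restrict (Ioi c)) := by
    convert ((memLp_max_sub_rpow hb hp hbp t c).sub
      (memLp_max_sub_rpow hb hp hbp 0 c)).const_mul b⁻¹ using 2 with s
    simp [ell, div_eq_inv_mul]
  simpa [hp.le] using lintegral_rpow_enorm_lt_top_of_eLpNorm_lt_top (by simpa using hp)
    ENNReal.ofReal_ne_top hmem.2

theorem setLIntegral_Iic_enorm_ell_rpow_lt_top {t b p c : ℝ} (ht : 0 ≤ t) (hb : b ≠ 0) (hb1 : b ≤ 1)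
    (hp : 0 ≤ p) (hbp : (b - 1) * p < -1) (hc : c < 0) : ∫⁻ s in Iic c, ‖ell t b s‖ₑ ^ p < ∞ := by
  have hpow : IntegrableOn (fun s : ℝ => t ^ p * (-s) ^ ((b - 1) * p)) (Iic c) := by
    refine Integrable.const_mul ?_ _
    exact (integrableOn_Iic_iff_integrableOn_Iio (by finiteness)).2
      (integrableOn_Ioi_rpow_of_lt hbp (neg_pos.2 hc)).comp_neg_Iio
  refine (setLIntegral_mono' measurableSet_Iic fun s hs => ?_).trans_lt hpow.lintegral_lt_top
  have hs0 : s < 0 := lt_of_le_of_lt hs hc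
  have hs1 : 0 ≤ -s := by linarith
  rw [enorm_eq_ofReal_abs, ENNReal.ofReal_rpow_of_nonneg (abs_nonneg _) hp, rpow_mul hs1,
    ← mul_rpow ht (rpow_nonneg hs1 _)]
  gcongr
  exact abs_ell_le_of_neg ht hb hb1 hs0

theorem lintegral_enorm_ell_rpow_lt_top {t b p : ℝ} (ht : 0 ≤ t) (hb : b ≠ 0) (hp : 0 < p)
    (hbp : -1 < b * p) (hbp1 : b * p < p - 1) : ∫⁻ s, ‖ell t b s‖ₑ ^ p < ∞ := by
  have hb1 : b ≤ 1 := le_of_mul_le_mul_right (by linarith) hp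
  rw [← lintegral_add_compl _ (measurableSet_Iic (a := (-1 : ℝ))), compl_Iic]
  exact ENNReal.add_lt_top.2
    ⟨setLIntegral_Iic_enorm_ell_rpow_lt_top ht hb hb1 hp.le (by linarith) (by norm_num),
      setLIntegral_Ioi_enorm_ell_rpow_lt_top hb hp hbp t (-1)⟩

theorem eventually_nhds_two_div_add_two {ρ b : ℝ} (hρ₁ : -1 < ρ) (hρ₂ : ρ < 0)
    (hb₁ : -ρ / 2 - 1 < b) (hb₂ : b < -ρ / 2) :
    ∀ᶠ p in 𝓝 (2 / (ρ + 2)), 1 < p ∧ p < 2 ∧ -1 < b * p ∧ b * p < p - 1 := by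
  have hρ : 0 < ρ + 2 := by linarith
  have hopen : IsOpen {p : ℝ | 1 < p ∧ p < 2 ∧ -1 < b * p ∧ b * p < p - 1} := by
    refine .and ?_ <| .and ?_ <| .and ?_ ?_
    all_goals exact isOpen_lt (by fun_prop) (by fun_prop)
  refine hopen.mem_nhds ⟨?_, ?_, ?_, ?_⟩
  all_goals field_simp; linarith

theorem stmt9 (ρ : ℝ) (hρ₁ : -1 < ρ) (hρ₂ : ρ < 0)
    (b : ℝ) (hb : b ≠ 0) (hb₁ : -ρ/2 - 1 < b) (hb₂ : b < -ρ/2)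
    (t : ℝ) (ht : 0 < t) :
    (∫⁻ s : ℝ, ∫⁻ u in Set.Ioi (0 : ℝ),
      ENNReal.ofReal (|ell t b s| * |ell t b (s + u)| * u ^ ρ)) < ⊤ := by
  have hnear := eventually_nhds_two_div_add_two hρ₁ hρ₂ hb₁ hb₂
  obtain ⟨p, hpρ, hp1, _, hbp, hbp1⟩ := hnear.exists_lt
  obtain ⟨q, hqρ, _, hq2, hbq, hbq1⟩ := hnear.exists_gt
  have hellp := lintegral_enorm_ell_rpow_lt_top ht.le hb (by linarith) hbp hbp1
  have hellq := lintegral_enorm_ell_rpow_lt_top ht.le hb (by linarith) hbq hbq1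
  have hell : Measurable fun s => ‖ell t b s‖ₑ := (measurable_ell t b).enorm
  simpa only [enorm_eq_ofReal_abs, ← ENNReal.ofReal_mul (abs_nonneg _),
    ← ENNReal.ofReal_mul (mul_nonneg (abs_nonneg _) (abs_nonneg _))] using
    lintegral_setLIntegral_Ioi_mul_add_mul_rpow_lt_top hp1 hpρ hqρ hq2.le hell hell
      hellp hellp hellq hellq
end

section
/- Let d ∈ (1/4, 1/2), t > 0, m ≥ 2, and for λ > 0 set G_λ(u,v) = e^{−λ|u−v|} |u−v|^{2d−1} ∫_0^∞ y^{d−1} (1+y)^{d−1} e^{−2λ|u−v| y} dy for u ≠ v. Then, with indices taken cyclically (s_{m+1} = s_1), lim_{λ → 0⁺} ∫_0^t ⋯ ∫_0^t ∏_{j=1}^m G_λ(s_j, s_{j+1}) ds_1 ⋯ ds_m = B(d, 1−2d)^m · ∫_0^t ⋯ ∫_0^t ∏_{j=1}^m |s_j − s_{j+1}|^{2d−1} ds_1 ⋯ ds_m, and the limit is finite. -/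
open MeasureTheory Real Set

/-- `G_λ(u,v) = e^{−λ|u−v|} |u−v|^{2d−1} ∫_0^∞ y^{d−1}(1+y)^{d−1} e^{−2λ|u−v|y} dy`. -/
noncomputable def tempG (d lam u v : ℝ) : ℝ :=
  Real.exp (-lam * |u - v|) * |u - v| ^ (2 * d - 1) *
    ∫ y in Set.Ioi (0 : ℝ),
      y ^ (d - 1) * (1 + y) ^ (d - 1) * Real.exp (-2 * lam * |u - v| * y)

/-! Dominated convergence reduces everything to the integrability of `∏ |sⱼ - sⱼ₊₁| ^ p` with
`p = 2d - 1`. A product over the edges of a path is integrated one vertex at a time, using only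
`sup_v ∫ |a - v| ^ p da < ∞`, but the closing edge of a cycle obstructs this. The cyclic product is
the geometric mean of the `m` path products obtained by deleting one edge and raising the remaining
factors to the power `m / (m - 1)`. By Hölder and invariance under rotation, its integral is at most
that of a single such path product, which is finite as soon as `p * m / (m - 1) > -1`, that is,
`d > 1 / (2m)`.
-/

open Filter
open scoped ENNReal Topology

section Products

variable {α M : Type*} [CommMonoid M] {m n : ℕ}

/-- The cyclic product `∏ⱼ K(sⱼ, sⱼ₊₁)` with `s_{m+1} = s₁`, the integrand of the `m`-th cumulant
attached to the kernel `K`. The points are indexed from `0`, and the successor of `j` is spelled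
`(j + 1) % m` because `Fin m` has an addition only for `m ≠ 0`. -/
def cyclicProd (K : α → α → M) (s : Fin m → α) : M :=
  ∏ j : Fin m, K (s j) (s ⟨((j : ℕ) + 1) % m, Nat.mod_lt _ j.pos⟩)

/-- The product `∏ⱼ K(xⱼ, xⱼ₊₁)` over the `n` edges of the path `x₀, …, xₙ`: a cyclic product with
its closing edge removed. -/
def pathProd (K : α → α → M) (x : Fin (n + 1) → α) : M :=
  ∏ j : Fin n, K (x j.castSucc) (x j.succ)

theorem cyclicProd_eq_prod_add_one (K : α → α → M) (s : Fin (n + 1) → α) :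
    cyclicProd K s = ∏ j, K (s j) (s (j + 1)) := by
  refine Finset.prod_congr rfl fun j _ => ?_
  congr 2
  ext
  simp [Fin.val_add]

theorem cyclicProd_const_mul (c : M) (K : α → α → M) (s : Fin m → α) :
    cyclicProd (fun u v => c * K u v) s = c ^ m * cyclicProd K s := by
  simp [cyclicProd, Finset.prod_mul_distrib]

theorem pathProd_cons (K : α → α → M) (a : α) (x : Fin (n + 1) → α) :
    pathProd K (Fin.cons a x : Fin (n + 2) → α) = K a (x 0) * pathProd K x := by
  simp [pathProd, Fin.prod_univ_succ]

theorem prod_pathProd_rotate (K : α → α → M) (x : Fin (n + 1) → α) :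
    ∏ i, pathProd K (fun j => x (j + i)) = cyclicProd K x ^ n := by
  have edge_orbit (k : Fin n) :
      ∏ i, K (x (k.castSucc + i)) (x (k.succ + i)) = cyclicProd K x := by
    rw [cyclicProd_eq_prod_add_one,
      ← Equiv.prod_comp (Equiv.addLeft k.castSucc) fun j => K (x j) (x (j + 1))]
    simp only [Equiv.coe_addLeft, ← Fin.coeSucc_eq_succ, add_right_comm]
  simp only [pathProd]
  rw [Finset.prod_comm]
  simp [edge_orbit]

variable [MeasurableSpace α] [MeasurableSpace M] [MeasurableMul₂ M] {K : α → α → M}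

theorem measurable_cyclicProd (hK : Measurable (Function.uncurry K)) :
    Measurable (cyclicProd K : (Fin m → α) → M) :=
  Finset.measurable_fun_prod _ fun j _ =>
    hK.comp (by fun_prop : Measurable fun s : Fin m → α => (s j, s _))

theorem measurable_pathProd (hK : Measurable (Function.uncurry K)) :
    Measurable (pathProd K : (Fin (n + 1) → α) → M) :=
  Finset.measurable_fun_prod _ fun j _ =>
    hK.comp (by fun_prop : Measurable fun x : Fin (n + 1) → α => (x j.castSucc, x j.succ))

end Products

theorem cyclicProd_eq_prod_pathProd_rpow {α : Type*} {n : ℕ} (hn : n ≠ 0) (K : α → α → ℝ≥0∞)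
    (x : Fin (n + 1) → α) :
    cyclicProd K x = ∏ i, pathProd (fun u v => K u v ^ ((n + 1) / n : ℝ))
      (fun j => x (j + i)) ^ (1 / (n + 1) : ℝ) := by
  have pathProd_rpow (y : Fin (n + 1) → α) :
      pathProd (fun u v => K u v ^ ((n + 1) / n : ℝ)) y = pathProd K y ^ ((n + 1) / n : ℝ) :=
    ENNReal.prod_rpow_of_nonneg (by positivity)
  have exponents : (n : ℝ) * ((n + 1) / n * (1 / (n + 1))) = 1 := by field_simp
  simp_rw [pathProd_rpow]
  rw [ENNReal.prod_rpow_of_nonneg (by positivity), ENNReal.prod_rpow_of_nonneg (by positivity),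
    prod_pathProd_rotate, ← ENNReal.rpow_natCast, ← ENNReal.rpow_mul, ← ENNReal.rpow_mul,
    exponents, ENNReal.rpow_one]

section CyclicHolder

variable {α : Type*} [MeasurableSpace α] {n : ℕ} {ν : Measure α} [SigmaFinite ν]
  {K : α → α → ℝ≥0∞} {C : ℝ≥0∞}

theorem lintegral_pi_fin_succ {f : (Fin (n + 1) → α) → ℝ≥0∞} (hf : Measurable f) :
    ∫⁻ s, f s ∂(Measure.pi fun _ => ν) =
      ∫⁻ x, ∫⁻ a, f (Fin.cons a x) ∂ν ∂(Measure.pi fun _ : Fin n => ν) := by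
  have split := (measurePreserving_piFinSuccAbove (fun _ : Fin (n + 1) => ν) 0).symm
  rw [← split.lintegral_comp hf,
    lintegral_prod_symm' _ (by fun_prop)]
  simp [MeasurableEquiv.piFinSuccAbove, Fin.insertNthEquiv, Fin.insertNth_zero']

theorem lintegral_pi_comp_equiv {ι : Type*} [Fintype ι] (e : Equiv.Perm ι)
    (f : (ι → α) → ℝ≥0∞) :
    ∫⁻ x, f (fun i => x (e i)) ∂(Measure.pi fun _ => ν) =
      ∫⁻ x, f x ∂(Measure.pi fun _ => ν) := by
  rw [← (measurePreserving_piCongrLeft (fun _ => ν) e.symm).lintegral_comp_emb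
    (MeasurableEquiv.measurableEmbedding _) f]
  refine lintegral_congr fun x => congrArg f (funext fun i => ?_)
  simpa [MeasurableEquiv.coe_piCongrLeft] using
    (Equiv.piCongrLeft_apply_apply (fun _ => α) e.symm x (e i)).symm

theorem lintegral_pathProd_le (hK : Measurable (Function.uncurry K))
    (hC : ∀ v, ∫⁻ a, K a v ∂ν ≤ C) :
    ∫⁻ x, pathProd K x ∂(Measure.pi fun _ : Fin (n + 1) => ν) ≤ C ^ n * ν univ := by
  induction n with
  | zero => simp [pathProd, Measure.pi_univ]
  | succ n ih =>
    calc ∫⁻ x, pathProd K x ∂(Measure.pi fun _ : Fin (n + 2) => ν)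
        = ∫⁻ x, (∫⁻ a, K a (x 0) ∂ν) * pathProd K x ∂(Measure.pi fun _ : Fin (n + 1) => ν) := by
          rw [lintegral_pi_fin_succ (measurable_pathProd hK)]
          refine lintegral_congr fun x => ?_
          simp only [pathProd_cons]
          exact lintegral_mul_const _ hK.of_uncurry_right
      _ ≤ ∫⁻ x, C * pathProd K x ∂(Measure.pi fun _ : Fin (n + 1) => ν) := by
          gcongr
          exact hC _
      _ = C * ∫⁻ x, pathProd K x ∂(Measure.pi fun _ : Fin (n + 1) => ν) :=
          lintegral_const_mul _ (measurable_pathProd hK)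
      _ ≤ C * (C ^ n * ν univ) := by gcongr
      _ = C ^ (n + 1) * ν univ := by rw [pow_succ', mul_assoc]

theorem lintegral_cyclicProd_le (hn : n ≠ 0) (hK : Measurable (Function.uncurry K))
    (hC : ∀ v, ∫⁻ a, K a v ^ ((n + 1) / n : ℝ) ∂ν ≤ C) :
    ∫⁻ x, cyclicProd K x ∂(Measure.pi fun _ : Fin (n + 1) => ν) ≤ C ^ n * ν univ := by
  set L : α → α → ℝ≥0∞ := fun u v => K u v ^ ((n + 1) / n : ℝ)
  set μ : Measure (Fin (n + 1) → α) := Measure.pi fun _ => ν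
  have hL : Measurable (Function.uncurry L) := hK.pow_const _
  calc ∫⁻ x, cyclicProd K x ∂μ
      = ∫⁻ x, ∏ i, pathProd L (fun j => x (j + i)) ^ (1 / (n + 1) : ℝ) ∂μ := by
        simp_rw [cyclicProd_eq_prod_pathProd_rpow hn, L]
    _ ≤ ∏ i, (∫⁻ x, pathProd L (fun j => x (j + i)) ∂μ) ^ (1 / (n + 1) : ℝ) := by
        refine ENNReal.lintegral_prod_norm_pow_le (p := fun _ => 1 / (n + 1)) _ (fun i _ => ?_) ?_
          fun _ _ => by positivity
        · exact ((measurable_pathProd hL).comp (by fun_prop)).aemeasurable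
        · simp [mul_inv_cancel₀ (Nat.cast_add_one_ne_zero (R := ℝ) n)]
    _ = ∏ _i : Fin (n + 1), (∫⁻ x, pathProd L x ∂μ) ^ (1 / (n + 1) : ℝ) := by
        refine Finset.prod_congr rfl fun i _ => congrArg (· ^ _) ?_
        exact lintegral_pi_comp_equiv (Equiv.addRight i) (pathProd L)
    _ = ∫⁻ x, pathProd L x ∂μ := by
        rw [Finset.prod_const, Finset.card_univ, Fintype.card_fin, ← ENNReal.rpow_mul_natCast,
          Nat.cast_succ, one_div_mul_cancel (by positivity), ENNReal.rpow_one]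
    _ ≤ C ^ n * ν univ := lintegral_pathProd_le hL hC

end CyclicHolder

theorem integrable_cyclicProd {α : Type*} [MeasurableSpace α] {n : ℕ} (hn : n ≠ 0)
    {ν : Measure α} [IsFiniteMeasure ν] {K : α → α → ℝ} {C : ℝ≥0∞}
    (hK : Measurable (Function.uncurry K)) (hK₀ : ∀ u v, 0 ≤ K u v) (hC : C ≠ ∞)
    (hKC : ∀ v, ∫⁻ a, .ofReal (K a v ^ ((n + 1) / n : ℝ)) ∂ν ≤ C) :
    Integrable (cyclicProd K) (Measure.pi fun _ : Fin (n + 1) => ν) := by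
  have ofReal_cyclicProd (s : Fin (n + 1) → α) :
      ENNReal.ofReal (cyclicProd K s) = cyclicProd (fun u v => .ofReal (K u v)) s :=
    ENNReal.ofReal_prod_of_nonneg fun _ _ => hK₀ _ _
  have cyclicProd_nonneg (s : Fin (n + 1) → α) : 0 ≤ cyclicProd K s :=
    Finset.prod_nonneg fun _ _ => hK₀ _ _
  have lintegral_le : ∫⁻ s, cyclicProd (fun u v => .ofReal (K u v)) s
      ∂(Measure.pi fun _ : Fin (n + 1) => ν) ≤ C ^ n * ν univ := by
    refine lintegral_cyclicProd_le hn hK.ennreal_ofReal fun v => ?_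
    simpa only [ENNReal.ofReal_rpow_of_nonneg (hK₀ _ _) (by positivity : (0 : ℝ) ≤ (n + 1) / n)]
      using hKC v
  refine ⟨(measurable_cyclicProd hK).aestronglyMeasurable, ?_⟩
  simp only [hasFiniteIntegral_iff_ofReal (.of_forall cyclicProd_nonneg), ofReal_cyclicProd]
  exact lintegral_le.trans_lt
    (ENNReal.mul_lt_top (ENNReal.pow_lt_top hC.lt_top) (measure_lt_top ν univ))

section RieszKernel

variable {E : Type*} [NormedAddCommGroup E] [MeasurableSpace E] [BorelSpace E]
  {μ : Measure E} {p : ℝ}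

theorem setLIntegral_norm_sub_rpow_le [μ.IsAddRightInvariant] (hp : p ≤ 0) (s : Set E) (v : E) :
    ∫⁻ a in s, .ofReal (‖a - v‖ ^ p) ∂μ ≤
      μ s + ∫⁻ w in Metric.ball 0 1, .ofReal (‖w‖ ^ p) ∂μ := by
  set g : E → ℝ≥0∞ := (Metric.ball 0 1).indicator fun w => .ofReal (‖w‖ ^ p) with hg
  have rpow_le (w : E) : ENNReal.ofReal (‖w‖ ^ p) ≤ 1 + g w := by
    by_cases hw : w ∈ Metric.ball 0 1
    · rw [hg, indicator_of_mem hw]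
      exact le_add_self
    · rw [mem_ball_zero_iff, not_lt] at hw
      exact (ENNReal.ofReal_le_one.2 (rpow_le_one_of_one_le_of_nonpos hw hp)).trans le_self_add
  calc ∫⁻ a in s, .ofReal (‖a - v‖ ^ p) ∂μ
      ≤ ∫⁻ a in s, (1 + g (a - v)) ∂μ := lintegral_mono fun a => rpow_le (a - v)
    _ = μ s + ∫⁻ a in s, g (a - v) ∂μ := by
        rw [lintegral_add_left measurable_const, setLIntegral_one]
    _ ≤ μ s + ∫⁻ a, g (a - v) ∂μ := by
        gcongr
        exact Measure.restrict_le_self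
    _ = μ s + ∫⁻ w in Metric.ball 0 1, .ofReal (‖w‖ ^ p) ∂μ := by
        rw [lintegral_sub_right_eq_self g v, hg, lintegral_indicator measurableSet_ball]

variable [NormedSpace ℝ E] [FiniteDimensional ℝ E] [Nontrivial E] [μ.IsAddHaarMeasure]

theorem setLIntegral_ball_norm_rpow_ne_top (hp : -(Module.finrank ℝ E : ℝ) < p) :
    ∫⁻ w in Metric.ball (0 : E) 1, .ofReal (‖w‖ ^ p) ∂μ ≠ ∞ := by
  have integrable : IntegrableOn (fun w : E => ‖w‖ ^ p) (Metric.ball 0 1) μ := by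
    refine integrableOn_ball_of_norm_le_rpow (C := 1) (α := -p) Module.finrank_pos
      (by linarith) (.of_forall fun w => ?_)
      (measurable_norm.pow_const p).aestronglyMeasurable
    rw [neg_neg, one_mul, norm_of_nonneg (by positivity)]
  exact integrable.lintegral_lt_top.ne

theorem integrableOn_cyclicProd_norm_sub_rpow {m : ℕ} (hm : 2 ≤ m)
    (hp : -(Module.finrank ℝ E : ℝ) * (m - 1) < p * m) (hp₀ : p ≤ 0)
    {s : Set E} (hs : μ s ≠ ∞) :
    IntegrableOn (cyclicProd fun u v : E => ‖u - v‖ ^ p) (univ.pi fun _ : Fin m => s)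
      (Measure.pi fun _ => μ) := by
  obtain ⟨n, rfl⟩ : ∃ n, m = n + 1 := ⟨m - 1, by omega⟩
  have hn : n ≠ 0 := by omega
  have hn₀ : (0 : ℝ) < n := by positivity
  set q : ℝ := p * ((n + 1) / n) with hq_def
  have hq : -(Module.finrank ℝ E : ℝ) < q := by
    push_cast at hp
    rw [hq_def, ← mul_div_assoc, lt_div_iff₀ hn₀]
    linarith
  have hq₀ : q ≤ 0 := mul_nonpos_of_nonpos_of_nonneg hp₀ (by positivity)
  have uniform_bound (v : E) :
      ∫⁻ a in s, .ofReal ((‖a - v‖ ^ p) ^ ((n + 1) / n : ℝ)) ∂μ ≤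
        μ s + ∫⁻ w in Metric.ball 0 1, .ofReal (‖w‖ ^ q) ∂μ := by
    simp_rw [← rpow_mul (norm_nonneg _)]
    exact setLIntegral_norm_sub_rpow_le hq₀ s v
  have : Fact (μ s < ∞) := ⟨hs.lt_top⟩
  rw [IntegrableOn, Measure.restrict_pi_pi]
  exact integrable_cyclicProd hn (by simp only [Function.uncurry_def]; fun_prop)
    (fun _ _ => by positivity)
    (ENNReal.add_ne_top.2 ⟨hs, setLIntegral_ball_norm_rpow_ne_top hq⟩) uniform_bound

end RieszKernel

theorem tendsto_setIntegral_Ioi_mul_exp {f : ℝ → ℝ} (hf : IntegrableOn f (Ioi 0)) :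
    Tendsto (fun c => ∫ y in Ioi (0 : ℝ), f y * exp (c * y)) (𝓝[≤] 0)
      (𝓝 (∫ y in Ioi (0 : ℝ), f y)) := by
  refine tendsto_integral_filter_of_dominated_convergence (fun y => |f y|) ?_ ?_ hf.abs ?_
  · exact .of_forall fun c => hf.aestronglyMeasurable.mul (by fun_prop)
  · filter_upwards [self_mem_nhdsWithin] with c (hc : c ≤ 0)
    filter_upwards [ae_restrict_mem measurableSet_Ioi] with y (hy : 0 < y)
    rw [norm_mul, norm_of_nonneg (exp_nonneg _)]
    exact mul_le_of_le_one_right (norm_nonneg _)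
      (exp_le_one_iff.2 (mul_nonpos_of_nonpos_of_nonneg hc hy.le))
  · refine .of_forall fun y => ?_
    have : Continuous fun c : ℝ => f y * exp (c * y) := by fun_prop
    exact (this.tendsto' 0 _ (by simp)).mono_left nhdsWithin_le_nhds

theorem setIntegral_Ioi_mul_exp_le {f : ℝ → ℝ} (hf : IntegrableOn f (Ioi 0))
    (hf₀ : ∀ y ∈ Ioi (0 : ℝ), 0 ≤ f y) {c : ℝ} (hc : c ≤ 0) :
    ∫ y in Ioi (0 : ℝ), f y * exp (c * y) ≤ ∫ y in Ioi (0 : ℝ), f y := by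
  refine integral_mono_of_nonneg ?_ hf ?_ <;>
    filter_upwards [ae_restrict_mem measurableSet_Ioi] with y hy
  · exact mul_nonneg (hf₀ y hy) (exp_nonneg _)
  · exact mul_le_of_le_one_right (hf₀ y hy)
      (exp_le_one_iff.2 (mul_nonpos_of_nonpos_of_nonneg hc (le_of_lt hy)))

theorem integrableOn_Ioi_rpow_mul_one_add_rpow {a b : ℝ} (ha : -1 < a) (hab : a + b < -1) :
    IntegrableOn (fun y : ℝ => y ^ a * (1 + y) ^ b) (Ioi 0) := by
  have measurable : Measurable fun y : ℝ => y ^ a * (1 + y) ^ b := by fun_prop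
  rw [← Ioc_union_Ioi_eq_Ioi zero_le_one]
  refine IntegrableOn.union ?_ ?_
  · refine Integrable.mono' (intervalIntegral.intervalIntegrable_rpow' (a := 0) (b := 1) ha).1
      measurable.aestronglyMeasurable ?_
    filter_upwards [ae_restrict_mem measurableSet_Ioc] with y ⟨hy, _⟩
    rw [norm_of_nonneg (by positivity)]
    exact mul_le_of_le_one_right (by positivity)
      (rpow_le_one_of_one_le_of_nonpos (by linarith) (by linarith))
  · refine Integrable.mono' (integrableOn_Ioi_rpow_of_lt hab one_pos)
      measurable.aestronglyMeasurable ?_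
    filter_upwards [ae_restrict_mem measurableSet_Ioi] with y (hy : 1 < y)
    have hy₀ : 0 < y := one_pos.trans hy
    rw [norm_of_nonneg (by positivity), rpow_add hy₀]
    gcongr ?_ * ?_
    exact rpow_le_rpow_of_nonpos hy₀ (by linarith) (by linarith)

section TemperedKernel

variable {d : ℝ}

theorem measurable_uncurry_tempG (d lam : ℝ) : Measurable (Function.uncurry (tempG d lam)) := by
  have integrand : StronglyMeasurable fun q : (ℝ × ℝ) × ℝ =>
      q.2 ^ (d - 1) * (1 + q.2) ^ (d - 1) * exp (-2 * lam * |q.1.1 - q.1.2| * q.2) :=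
    Measurable.stronglyMeasurable (by fun_prop)
  exact Measurable.mul (by fun_prop)
    (integrand.integral_prod_right' (ν := volume.restrict (Ioi 0))).measurable

theorem tempG_nonneg (d lam u v : ℝ) : 0 ≤ tempG d lam u v := by
  refine mul_nonneg (by positivity) (setIntegral_nonneg measurableSet_Ioi fun y hy => ?_)
  have : 0 < y := hy
  positivity

theorem tempG_le (hd₀ : 0 < d) (hd : d < 1 / 2) {lam : ℝ} (hlam : 0 ≤ lam) (u v : ℝ) :
    tempG d lam u v ≤
      (∫ y in Ioi (0 : ℝ), y ^ (d - 1) * (1 + y) ^ (d - 1)) * |u - v| ^ (2 * d - 1) := by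
  have weight_nonneg (y : ℝ) (hy : y ∈ Ioi (0 : ℝ)) : 0 ≤ y ^ (d - 1) * (1 + y) ^ (d - 1) := by
    have : 0 < y := hy
    positivity
  have laplace_le := setIntegral_Ioi_mul_exp_le
    (integrableOn_Ioi_rpow_mul_one_add_rpow (a := d - 1) (b := d - 1)
      (by linarith) (by linarith)) weight_nonneg
    (c := -2 * lam * |u - v|) (by nlinarith [mul_nonneg hlam (abs_nonneg (u - v))])
  have exp_le : exp (-lam * |u - v|) ≤ 1 :=
    exp_le_one_iff.2 (by nlinarith [mul_nonneg hlam (abs_nonneg (u - v))])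
  rw [tempG, mul_comm]
  refine mul_le_mul laplace_le (mul_le_of_le_one_left (by positivity) exp_le) (by positivity) ?_
  exact setIntegral_nonneg measurableSet_Ioi weight_nonneg

theorem tendsto_tempG_nhdsGE_zero (hd₀ : 0 < d) (hd : d < 1 / 2) (u v : ℝ) :
    Tendsto (fun lam => tempG d lam u v) (𝓝[≥] 0)
      (𝓝 ((∫ y in Ioi (0 : ℝ), y ^ (d - 1) * (1 + y) ^ (d - 1)) * |u - v| ^ (2 * d - 1))) := by
  have prefactor : Tendsto (fun lam : ℝ => exp (-lam * |u - v|) * |u - v| ^ (2 * d - 1)) (𝓝[≥] 0)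
      (𝓝 (|u - v| ^ (2 * d - 1))) :=
    (Continuous.tendsto' (by fun_prop) 0 _ (by simp)).mono_left nhdsWithin_le_nhds
  have rate : Tendsto (fun lam : ℝ => -2 * lam * |u - v|) (𝓝[≥] 0) (𝓝[≤] 0) := by
    refine tendsto_nhdsWithin_iff.2
      ⟨(Continuous.tendsto' (by fun_prop) 0 _ (by simp)).mono_left nhdsWithin_le_nhds, ?_⟩
    filter_upwards [self_mem_nhdsWithin] with lam (hlam : 0 ≤ lam)
    exact mem_Iic.2 (by nlinarith [mul_nonneg hlam (abs_nonneg (u - v))])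
  rw [mul_comm]
  exact prefactor.mul ((tendsto_setIntegral_Ioi_mul_exp
    (integrableOn_Ioi_rpow_mul_one_add_rpow (a := d - 1) (b := d - 1)
      (by linarith) (by linarith))).comp rate)

end TemperedKernel

theorem tendsto_integral_cyclicProd_of_dominated {α κ : Type*} [MeasurableSpace α] {m : ℕ}
    {μ : Measure (Fin m → α)} {l : Filter κ} [l.IsCountablyGenerated] {K : κ → α → α → ℝ}
    {bound K₀ : α → α → ℝ} (hK : ∀ᶠ k in l, Measurable (Function.uncurry (K k)))
    (h_bound : ∀ᶠ k in l, ∀ u v, ‖K k u v‖ ≤ bound u v)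
    (h_integrable : Integrable (cyclicProd bound) μ)
    (h_lim : ∀ u v, Tendsto (fun k => K k u v) l (𝓝 (K₀ u v))) :
    Tendsto (fun k => ∫ s, cyclicProd (K k) s ∂μ) l (𝓝 (∫ s, cyclicProd K₀ s ∂μ)) := by
  refine tendsto_integral_filter_of_dominated_convergence _ ?_ ?_ h_integrable ?_
  · filter_upwards [hK] with k hk using (measurable_cyclicProd hk).aestronglyMeasurable
  · filter_upwards [h_bound] with k hk
    refine .of_forall fun s => ?_
    rw [cyclicProd, norm_prod]
    exact Finset.prod_le_prod (fun _ _ => norm_nonneg _) fun _ _ => hk _ _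
  · exact .of_forall fun s => tendsto_finsetProd _ fun _ _ => h_lim _ _

theorem stmt15_general {d : ℝ} {m : ℕ} (hm : 2 ≤ m) (hd₁ : 1 / (2 * m) < d) (hd₂ : d < 1 / 2)
    {S : Set ℝ} (hS : volume S ≠ ∞) :
    IntegrableOn (cyclicProd fun u v : ℝ => |u - v| ^ (2 * d - 1))
      (univ.pi fun _ : Fin m => S) ∧
    Tendsto (fun lam => ∫ s in univ.pi fun _ : Fin m => S, cyclicProd (tempG d lam) s) (𝓝[>] 0)
      (𝓝 ((∫ y in Ioi (0 : ℝ), y ^ (d - 1) * (1 + y) ^ (d - 1)) ^ m *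
        ∫ s in univ.pi fun _ : Fin m => S, cyclicProd (fun u v => |u - v| ^ (2 * d - 1)) s)) := by
  have hd₀ : 0 < d := lt_of_le_of_lt (by positivity) hd₁
  have exponent : -(Module.finrank ℝ ℝ : ℝ) * (m - 1) < (2 * d - 1) * m := by
    rw [div_lt_iff₀ (by positivity)] at hd₁
    simp only [Module.finrank_self, Nat.cast_one]
    linarith
  have integrable : IntegrableOn (cyclicProd fun u v : ℝ => |u - v| ^ (2 * d - 1))
      (univ.pi fun _ : Fin m => S) :=
    integrableOn_cyclicProd_norm_sub_rpow hm exponent (by linarith) hS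
  refine ⟨integrable, ?_⟩
  set B := ∫ y in Ioi (0 : ℝ), y ^ (d - 1) * (1 + y) ^ (d - 1)
  rw [← integral_const_mul]
  simp_rw [← cyclicProd_const_mul]
  refine tendsto_integral_cyclicProd_of_dominated (.of_forall (measurable_uncurry_tempG d))
    (bound := fun u v => B * |u - v| ^ (2 * d - 1)) ?_ ?_ fun u v =>
      (tendsto_tempG_nhdsGE_zero hd₀ hd₂ u v).mono_left (nhdsWithin_mono _ Ioi_subset_Ici_self)
  · filter_upwards [self_mem_nhdsWithin] with lam hlam u v
    rw [norm_of_nonneg (tempG_nonneg d lam u v)]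
    exact tempG_le hd₀ hd₂ (le_of_lt hlam) u v
  · simpa only [funext (cyclicProd_const_mul _ _)] using integrable.const_mul _

theorem stmt15 (d : ℝ) (hd₁ : 1/4 < d) (hd₂ : d < 1/2)
    (t : ℝ) (ht : 0 < t) (m : ℕ) (hm : 2 ≤ m) :
    -- the limit is finite
    IntegrableOn (fun s : Fin m → ℝ => ∏ j : Fin m,
        |s j - s ⟨((j : ℕ) + 1) % m, Nat.mod_lt _ (by omega)⟩| ^ (2 * d - 1))
      (Set.univ.pi (fun _ : Fin m => Set.Ioc (0 : ℝ) t)) ∧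
    -- convergence of the cumulant integrals as λ → 0⁺
    Filter.Tendsto
      (fun lam : ℝ =>
        ∫ s in Set.univ.pi (fun _ : Fin m => Set.Ioc (0 : ℝ) t), ∏ j : Fin m,
          tempG d lam (s j) (s ⟨((j : ℕ) + 1) % m, Nat.mod_lt _ (by omega)⟩))
      (nhdsWithin 0 (Set.Ioi 0))
      (nhds ((∫ y in Set.Ioi (0 : ℝ), y ^ (d - 1) * (1 + y) ^ (d - 1)) ^ m *
        ∫ s in Set.univ.pi (fun _ : Fin m => Set.Ioc (0 : ℝ) t), ∏ j : Fin m,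
          |s j - s ⟨((j : ℕ) + 1) % m, Nat.mod_lt _ (by omega)⟩| ^ (2 * d - 1))) := by
  have hm' : (2 : ℝ) ≤ m := mod_cast hm
  have hd : 1 / (2 * (m : ℝ)) < d :=
    (one_div_le_one_div_of_le (by norm_num) (by linarith)).trans_lt hd₁
  exact stmt15_general hm hd hd₂ (by simp)
end
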